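/- arXiv:1304.5392 — 4 statements merged into one kernel-verified Lean document; each statement's English description precedes it below -/
import Mathlib

section
/- Fix a real number k ≥ 1. Define, for x ∈ (0, π/2), A(x) = cos(x)·(sin(x) − x·cos(x))²·(x − cos(x)·sin(x)), B(x) = (x − cos(x)·sin(x))²·(sin(x) − x·cos(x)), and C(x) = x·sin²(x)·(−2x²·cos(x) + x·sin(x) + cos(x)·sin²(x)). Then the function x ↦ C(x)/(k·A(x) + B(x)) is strictly increasing on (0, π/2), and for every x ∈ (0, π/2) one has 5/(12(k+2)) < C(x)/(k·A(x) + B(x)) < 1. -/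
open Real Set

/-! Let `P x = sin x - x cos x = ∫₀ˣ t sin t dt` and `Q x = x - cos x sin x = ∫₀ˣ 2 sin² t dt`.
Since `cos x * P x + Q x = x sin² x`, the quotient factors as
`C / (k A + B) = f / ((k - 1) h + 1)` with `f = C / (A + B) = 2x / Q - sin / P` and
`h = A / (A + B) = cos * P / (x sin²)`.

The derivative of `f` is `Q / P² - P (2x) / Q²`. By Cauchy–Schwarz `6 P² ≤ x³ Q`, and Taylor
expansion gives `x³ P (2x) < 6 Q²`; multiplying, `P² P (2x) < Q³`, so `f` increases, up to
`f (π / 2) = 1`. The Padé approximants of `sin` and `tan` bound `f` below by its limit `4 / 5`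
at `0`. As `h' = -C / (x³ sin⁵)` and `C > 0`, `h` decreases, and the Cusa–Huygens inequality
bounds it by its limit `1 / 3` at `0`. -/

theorem nonneg_of_hasDerivAt_nonneg {f f' : ℝ → ℝ} {a x : ℝ}
    (hf : ∀ y, a ≤ y → HasDerivAt f (f' y) y) (hf' : ∀ y, a ≤ y → 0 ≤ f' y)
    (ha : 0 ≤ f a) (hx : a ≤ x) : 0 ≤ f x := by
  have hmono : MonotoneOn f (Ici a) :=
    monotoneOn_of_hasDerivWithinAt_nonneg (convex_Ici a)
      (fun y hy => (hf y hy).continuousAt.continuousWithinAt)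
      (fun y hy => (hf y (interior_subset hy)).hasDerivWithinAt)
      (fun y hy => hf' y (interior_subset hy))
  exact ha.trans (hmono self_mem_Ici hx hx)

section Taylor

open scoped Nat

/-- The Taylor polynomial of `sin` at `0` consisting of its first `n` nonzero terms. -/
noncomputable def sinTaylor (n : ℕ) (x : ℝ) : ℝ :=
  ∑ i ∈ Finset.range n, (-1) ^ i * x ^ (2 * i + 1) / (2 * i + 1)!

/-- The Taylor polynomial of `cos` at `0` consisting of its first `n` nonzero terms. -/
noncomputable def cosTaylor (n : ℕ) (x : ℝ) : ℝ :=
  ∑ i ∈ Finset.range n, (-1) ^ i * x ^ (2 * i) / (2 * i)!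

theorem sinTaylor_zero_right (n : ℕ) : sinTaylor n 0 = 0 := by
  simp [sinTaylor]

theorem cosTaylor_succ_zero_right (n : ℕ) : cosTaylor (n + 1) 0 = 1 := by
  simp [cosTaylor, Finset.sum_range_succ']

theorem hasDerivAt_sinTaylor (n : ℕ) (x : ℝ) :
    HasDerivAt (sinTaylor n) (cosTaylor n x) x := by
  refine HasDerivAt.fun_sum fun i _ => ?_
  refine (((hasDerivAt_pow (2 * i + 1) x).const_mul ((-1) ^ i)).div_const _).congr_deriv ?_
  rw [Nat.factorial_succ]
  push_cast
  field_simp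

theorem hasDerivAt_cosTaylor_succ (n : ℕ) (x : ℝ) :
    HasDerivAt (cosTaylor (n + 1)) (-sinTaylor n x) x := by
  have hshift : cosTaylor (n + 1) = fun y : ℝ =>
      ∑ i ∈ Finset.range n, (-1) ^ (i + 1) * y ^ (2 * (i + 1)) / (2 * (i + 1))! + 1 := by
    funext y
    simp [cosTaylor, Finset.sum_range_succ']
  rw [hshift, sinTaylor, ← Finset.sum_neg_distrib]
  refine HasDerivAt.add_const _ (HasDerivAt.fun_sum fun i _ => ?_)
  refine (((hasDerivAt_pow (2 * (i + 1)) x).const_mul ((-1) ^ (i + 1))).div_const _).congr_deriv ?_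
  rw [show 2 * (i + 1) = 2 * i + 1 + 1 by ring, Nat.factorial_succ (2 * i + 1)]
  push_cast
  field_simp
  simp [pow_succ, mul_comm]

theorem neg_one_pow_mul_sin_sub_sinTaylor_nonneg_of_cos {n : ℕ}
    (hcos : ∀ y : ℝ, 0 ≤ y → 0 ≤ (-1) ^ (n + 1) * (cos y - cosTaylor (n + 1) y))
    {x : ℝ} (hx : 0 ≤ x) : 0 ≤ (-1) ^ (n + 1) * (sin x - sinTaylor (n + 1) x) :=
  nonneg_of_hasDerivAt_nonneg (f := fun y => (-1) ^ (n + 1) * (sin y - sinTaylor (n + 1) y))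
    (fun y _ => ((hasDerivAt_sin y).fun_sub (hasDerivAt_sinTaylor _ y)).const_mul _)
    hcos (by simp [sinTaylor_zero_right]) hx

theorem neg_one_pow_mul_cos_sub_cosTaylor_nonneg (n : ℕ) {x : ℝ} (hx : 0 ≤ x) :
    0 ≤ (-1) ^ (n + 1) * (cos x - cosTaylor (n + 1) x) := by
  induction n generalizing x with
  | zero => simpa [cosTaylor] using cos_le_one x
  | succ n ih =>
    refine nonneg_of_hasDerivAt_nonneg
      (f := fun y => (-1) ^ (n + 2) * (cos y - cosTaylor (n + 2) y))
      (fun y _ => ((hasDerivAt_cos y).fun_sub (hasDerivAt_cosTaylor_succ _ y)).const_mul _)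
      (fun y hy => ?_) (by simp [cosTaylor_succ_zero_right]) hx
    linear_combination neg_one_pow_mul_sin_sub_sinTaylor_nonneg_of_cos (fun _ => ih) hy

theorem neg_one_pow_mul_sin_sub_sinTaylor_nonneg (n : ℕ) {x : ℝ} (hx : 0 ≤ x) :
    0 ≤ (-1) ^ (n + 1) * (sin x - sinTaylor (n + 1) x) :=
  neg_one_pow_mul_sin_sub_sinTaylor_nonneg_of_cos
    (fun _ => neg_one_pow_mul_cos_sub_cosTaylor_nonneg n) hx

end Taylor

/-- The function `P x = ∫₀ˣ t sin t dt`, a factor of `A` and `B`. -/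
noncomputable def sinSubMulCos (x : ℝ) : ℝ := sin x - x * cos x

theorem hasDerivAt_sinSubMulCos (x : ℝ) : HasDerivAt sinSubMulCos (x * sin x) x :=
  ((hasDerivAt_sin x).fun_sub ((hasDerivAt_id' x).fun_mul (hasDerivAt_cos x))).congr_deriv (by ring)

theorem neg_one_pow_mul_sinSubMulCos_sub_taylor_nonneg (n : ℕ) {x : ℝ} (hx : 0 ≤ x) :
    0 ≤ (-1) ^ (n + 1) *
      (sinSubMulCos x - (sinTaylor (n + 2) x - x * cosTaylor (n + 2) x)) := by
  refine nonneg_of_hasDerivAt_nonneg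
    (f := fun y => (-1) ^ (n + 1) *
      (sinSubMulCos y - (sinTaylor (n + 2) y - y * cosTaylor (n + 2) y)))
    (fun y _ => ((hasDerivAt_sinSubMulCos y).fun_sub ((hasDerivAt_sinTaylor _ y).fun_sub
      ((hasDerivAt_id' y).fun_mul (hasDerivAt_cosTaylor_succ _ y)))).const_mul _)
    (fun y hy => ?_) (by simp [sinSubMulCos, sinTaylor_zero_right]) hx
  linear_combination mul_nonneg hy (neg_one_pow_mul_sin_sub_sinTaylor_nonneg n hy)

theorem sinSubMulCos_pos {x : ℝ} (hx : x ∈ Ioc 0 π) : 0 < sinSubMulCos x := by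
  have hmono : StrictMonoOn sinSubMulCos (Icc 0 π) :=
    strictMonoOn_of_hasDerivWithinAt_pos (convex_Icc 0 π)
      (fun y _ => (hasDerivAt_sinSubMulCos y).continuousAt.continuousWithinAt)
      (fun y _ => (hasDerivAt_sinSubMulCos y).hasDerivWithinAt)
      (fun y hy => by
        rw [interior_Icc] at hy
        exact mul_pos hy.1 (sin_pos_of_mem_Ioo hy))
  simpa [sinSubMulCos] using hmono (left_mem_Icc.2 pi_pos.le) (Ioc_subset_Icc_self hx) hx.1

/-- The function `Q x = ∫₀ˣ 2 sin² t dt`, a factor of `A` and `B`. -/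
noncomputable def subCosMulSin (x : ℝ) : ℝ := x - cos x * sin x

theorem two_mul_subCosMulSin (x : ℝ) : 2 * subCosMulSin x = 2 * x - sin (2 * x) := by
  rw [subCosMulSin, sin_two_mul]
  ring

theorem hasDerivAt_subCosMulSin (x : ℝ) : HasDerivAt subCosMulSin (2 * sin x ^ 2) x :=
  ((hasDerivAt_id x).sub ((hasDerivAt_cos x).mul (hasDerivAt_sin x))).congr_deriv
    (by linear_combination -sin_sq_add_cos_sq x)

theorem subCosMulSin_pos {x : ℝ} (hx : 0 < x) : 0 < subCosMulSin x := by
  linarith [two_mul_subCosMulSin x, sin_lt (x := 2 * x) (by positivity)]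

theorem cos_mul_sinSubMulCos_add_subCosMulSin (x : ℝ) :
    cos x * sinSubMulCos x + subCosMulSin x = x * sin x ^ 2 := by
  rw [sinSubMulCos, subCosMulSin]
  linear_combination -x * sin_sq_add_cos_sq x

-- Cauchy–Schwarz for the functions `t` and `sin t` on `[0, x]`: the integral of
-- `(t - c * sin t) ^ 2` is a nonnegative quadratic polynomial in `c`.
theorem six_mul_sinSubMulCos_sq_le {x : ℝ} (hx : 0 ≤ x) :
    6 * sinSubMulCos x ^ 2 ≤ x ^ 3 * subCosMulSin x := by
  have hquad (c : ℝ) :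
      0 ≤ subCosMulSin x / 2 * (c * c) + -2 * sinSubMulCos x * c + x ^ 3 / 3 := by
    refine nonneg_of_hasDerivAt_nonneg
      (f := fun t => subCosMulSin t / 2 * (c * c) + -2 * sinSubMulCos t * c + t ^ 3 / 3)
      (f' := fun t => (t - c * sin t) ^ 2)
      (fun t _ => ?_) (fun t _ => sq_nonneg _) (by simp [subCosMulSin, sinSubMulCos]) hx
    refine (((((hasDerivAt_subCosMulSin t).div_const 2).mul_const (c * c)).add
      (((hasDerivAt_sinSubMulCos t).const_mul (-2)).mul_const c)).add
      ((hasDerivAt_pow 3 t).div_const 3)).congr_deriv ?_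
    norm_num
    ring
  have := discrim_le_zero hquad
  rw [discrim] at this
  linarith

theorem sq_lt_ten_of_mem_Ioc {t : ℝ} (ht : t ∈ Ioc 0 π) : t ^ 2 < 10 := by
  nlinarith [ht.1, ht.2, pi_lt_d2]

-- The Taylor polynomials of `P t / t ^ 3` and `(t - sin t) / t ^ 3`, in the variable `y = t ^ 2`.
theorem taylor_lt_twelve_mul_taylor_sq {y : ℝ} (hy : y ∈ Ioo 0 10) :
    1 / 3 - y / 30 + y ^ 2 / 840 <
      12 * (1 / 6 - y / 120 + y ^ 2 / 5040 - y ^ 3 / 362880) ^ 2 := by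
  have hy0 : 0 < y := hy.1
  have hquad : 0 < 11 / 25200 - 23 / 453600 * y + 68 / 76204800 * y ^ 2 := by
    linarith [sq_nonneg (y - 10), hy.2]
  have hcubic : 0 ≤ y ^ 2 * (10 - y) := mul_nonneg (by positivity) (by linarith [hy.2])
  have hquartic : 0 ≤ y ^ 4 := by positivity
  have hsum := mul_pos (pow_pos hy0 2) (show 0 < 11 / 25200 - 23 / 453600 * y
    + 13 / 12700800 * y ^ 2 - y ^ 3 / 76204800 + y ^ 4 / 10973491200 by linarith)
  linarith

theorem pow_three_mul_sinSubMulCos_lt {t : ℝ} (ht : t ∈ Ioc 0 π) :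
    t ^ 3 * sinSubMulCos t < 12 * (t - sin t) ^ 2 := by
  have ht0 : 0 < t := ht.1
  have ht2 := sq_lt_ten_of_mem_Ioc ht
  have hP : sinSubMulCos t ≤ t ^ 3 * (1 / 3 - t ^ 2 / 30 + t ^ 4 / 840) := by
    have := neg_one_pow_mul_sinSubMulCos_sub_taylor_nonneg 2 ht0.le
    norm_num [sinTaylor, cosTaylor, Finset.sum_range_succ, Nat.factorial] at this
    linarith
  have hS : t ^ 3 * (1 / 6 - t ^ 2 / 120 + t ^ 4 / 5040 - t ^ 6 / 362880) ≤ t - sin t := by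
    have := neg_one_pow_mul_sin_sub_sinTaylor_nonneg 4 ht0.le
    norm_num [sinTaylor, cosTaylor, Finset.sum_range_succ, Nat.factorial] at this
    linarith
  have hpoly : 1 / 3 - t ^ 2 / 30 + t ^ 4 / 840 <
      12 * (1 / 6 - t ^ 2 / 120 + t ^ 4 / 5040 - t ^ 6 / 362880) ^ 2 := by
    simpa only [← pow_mul] using taylor_lt_twelve_mul_taylor_sq ⟨by positivity, ht2⟩
  have hpos : 0 < 1 / 6 - t ^ 2 / 120 + t ^ 4 / 5040 - t ^ 6 / 362880 := by
    have : 0 ≤ t ^ 4 * (72 - t ^ 2) := mul_nonneg (by positivity) (by linarith)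
    linarith
  calc t ^ 3 * sinSubMulCos t
      ≤ t ^ 3 * (t ^ 3 * (1 / 3 - t ^ 2 / 30 + t ^ 4 / 840)) := by gcongr
    _ = t ^ 6 * (1 / 3 - t ^ 2 / 30 + t ^ 4 / 840) := by ring
    _ < t ^ 6 * (12 * (1 / 6 - t ^ 2 / 120 + t ^ 4 / 5040 - t ^ 6 / 362880) ^ 2) := by gcongr
    _ = 12 * (t ^ 3 * (1 / 6 - t ^ 2 / 120 + t ^ 4 / 5040 - t ^ 6 / 362880)) ^ 2 := by ring
    _ ≤ 12 * (t - sin t) ^ 2 := by gcongr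

-- Compares `sin t` with its `[3/2]` Padé approximant, whence the constants.
theorem mul_sixty_sub_lt_mul_sin {t : ℝ} (ht : t ∈ Ioc 0 π) :
    t * (60 - 7 * t ^ 2) < (60 + 3 * t ^ 2) * sin t := by
  have ht0 : 0 < t := ht.1
  have hS : t - t ^ 3 / 6 + t ^ 5 / 120 - t ^ 7 / 5040 ≤ sin t := by
    have := neg_one_pow_mul_sin_sub_sinTaylor_nonneg 3 ht0.le
    norm_num [sinTaylor, cosTaylor, Finset.sum_range_succ, Nat.factorial] at this
    linarith
  have hpoly : 0 < t ^ 7 * (22 - t ^ 2) :=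
    mul_pos (by positivity) (by linarith [sq_lt_ten_of_mem_Ioc ht])
  calc t * (60 - 7 * t ^ 2)
      < (60 + 3 * t ^ 2) * (t - t ^ 3 / 6 + t ^ 5 / 120 - t ^ 7 / 5040) := by linarith
    _ ≤ (60 + 3 * t ^ 2) * sin t := by gcongr

-- Equivalent to `x (15 - x²) cos x < (15 - 6 x²) sin x`, the `[3/2]` Padé approximant of `tan`.
theorem five_mul_sq_mul_sin_lt {x : ℝ} (hx : x ∈ Ioc 0 π) :
    5 * x ^ 2 * sin x < (15 - x ^ 2) * sinSubMulCos x := by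
  have hx0 : 0 < x := hx.1
  have hx2 := sq_lt_ten_of_mem_Ioc hx
  have hS : sin x ≤ x - x ^ 3 / 6 + x ^ 5 / 120 - x ^ 7 / 5040 + x ^ 9 / 362880 := by
    have := neg_one_pow_mul_sin_sub_sinTaylor_nonneg 4 hx0.le
    norm_num [sinTaylor, cosTaylor, Finset.sum_range_succ, Nat.factorial] at this
    linarith
  have hP : x ^ 3 / 3 - x ^ 5 / 30 + x ^ 7 / 840 - x ^ 9 / 45360 ≤ sinSubMulCos x := by
    have := neg_one_pow_mul_sinSubMulCos_sub_taylor_nonneg 3 hx0.le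
    norm_num [sinTaylor, cosTaylor, Finset.sum_range_succ, Nat.factorial] at this
    linarith
  have hpoly : 0 < x ^ 7 * (432 - 24 * x ^ 2 + 3 / 8 * x ^ 4) :=
    mul_pos (by positivity) (by linarith [sq_nonneg (x ^ 2)])
  calc 5 * x ^ 2 * sin x
      ≤ 5 * x ^ 2 * (x - x ^ 3 / 6 + x ^ 5 / 120 - x ^ 7 / 5040 + x ^ 9 / 362880) := by gcongr
    _ < (15 - x ^ 2) * (x ^ 3 / 3 - x ^ 5 / 30 + x ^ 7 / 840 - x ^ 9 / 45360) := by linarith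
    _ ≤ (15 - x ^ 2) * sinSubMulCos x := by gcongr; linarith

theorem three_mul_sin_lt_mul_two_add_cos {t : ℝ} (ht : t ∈ Ioc 0 π) :
    3 * sin t < t * (2 + cos t) := by
  have ht0 : 0 < t := ht.1
  have hS : sin t ≤ t - t ^ 3 / 6 + t ^ 5 / 120 := by
    have := neg_one_pow_mul_sin_sub_sinTaylor_nonneg 2 ht0.le
    norm_num [sinTaylor, cosTaylor, Finset.sum_range_succ, Nat.factorial] at this
    linarith
  have hC : 1 - t ^ 2 / 2 + t ^ 4 / 24 - t ^ 6 / 720 ≤ cos t := by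
    have := neg_one_pow_mul_cos_sub_cosTaylor_nonneg 3 ht0.le
    norm_num [sinTaylor, cosTaylor, Finset.sum_range_succ, Nat.factorial] at this
    linarith
  have hpoly : 0 < t ^ 5 * (12 - t ^ 2) :=
    mul_pos (by positivity) (by linarith [sq_lt_ten_of_mem_Ioc ht])
  calc 3 * sin t ≤ 3 * (t - t ^ 3 / 6 + t ^ 5 / 120) := by gcongr
    _ < t * (2 + (1 - t ^ 2 / 2 + t ^ 4 / 24 - t ^ 6 / 720)) := by linarith
    _ ≤ t * (2 + cos t) := by gcongr

/-- The function `A = cos * P² * Q`, weighted by `k` in the denominator of the quotient. -/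
noncomputable def wilkerA (x : ℝ) : ℝ := cos x * sinSubMulCos x ^ 2 * subCosMulSin x

/-- The function `B = Q² * P`, the part of the denominator that does not depend on `k`. -/
noncomputable def wilkerB (x : ℝ) : ℝ := subCosMulSin x ^ 2 * sinSubMulCos x

/-- The function `C`, the numerator of the quotient. -/
noncomputable def wilkerC (x : ℝ) : ℝ :=
  x * sin x ^ 2 * (-2 * x ^ 2 * cos x + x * sin x + cos x * sin x ^ 2)

theorem wilkerA_add_wilkerB (x : ℝ) :
    wilkerA x + wilkerB x = x * sin x ^ 2 * (sinSubMulCos x * subCosMulSin x) := by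
  rw [wilkerA, wilkerB, ← cos_mul_sinSubMulCos_add_subCosMulSin]
  ring

section

variable {x : ℝ}

theorem mem_Ioc_pi (hx : x ∈ Ioc 0 (π / 2)) : x ∈ Ioc 0 π :=
  ⟨hx.1, hx.2.trans (half_le_self pi_pos.le)⟩

theorem two_mul_mem_Ioc_pi (hx : x ∈ Ioc 0 (π / 2)) : 2 * x ∈ Ioc 0 π :=
  ⟨by linarith [hx.1], by linarith [hx.2]⟩

theorem sin_pos_of_mem_Ioc_pi_div_two (hx : x ∈ Ioc 0 (π / 2)) : 0 < sin x :=
  sin_pos_of_pos_of_lt_pi hx.1 (by linarith [hx.2, pi_pos])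

theorem wilkerA_add_wilkerB_pos (hx : x ∈ Ioc 0 (π / 2)) : 0 < wilkerA x + wilkerB x := by
  have hP := sinSubMulCos_pos (mem_Ioc_pi hx)
  have hQ := subCosMulSin_pos hx.1
  have hsin := sin_pos_of_mem_Ioc_pi_div_two hx
  have hx0 := hx.1
  rw [wilkerA_add_wilkerB]
  positivity

theorem wilkerC_div_wilkerA_add_wilkerB (hx : x ∈ Ioc 0 (π / 2)) :
    wilkerC x / (wilkerA x + wilkerB x) =
      2 * x / subCosMulSin x - sin x / sinSubMulCos x := by
  have hP := sinSubMulCos_pos (mem_Ioc_pi hx)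
  have hQ := subCosMulSin_pos hx.1
  have hsin := sin_pos_of_mem_Ioc_pi_div_two hx
  have hx0 := hx.1
  rw [wilkerA_add_wilkerB, wilkerC, mul_div_mul_left _ _ (by positivity),
    div_sub_div _ _ hQ.ne' hP.ne',
    mul_comm (sinSubMulCos x) (subCosMulSin x)]
  congr 1
  rw [sinSubMulCos, subCosMulSin]
  ring

theorem wilkerA_div_wilkerA_add_wilkerB (hx : x ∈ Ioc 0 (π / 2)) :
    wilkerA x / (wilkerA x + wilkerB x) = cos x * sinSubMulCos x / (x * sin x ^ 2) := by
  have hP := sinSubMulCos_pos (mem_Ioc_pi hx)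
  have hQ := subCosMulSin_pos hx.1
  have hsin := sin_pos_of_mem_Ioc_pi_div_two hx
  have hx0 := hx.1
  rw [wilkerA_add_wilkerB, wilkerA]
  field_simp

theorem wilkerC_div_eq (k : ℝ) (hx : x ∈ Ioc 0 (π / 2)) :
    wilkerC x / (k * wilkerA x + wilkerB x) =
      wilkerC x / (wilkerA x + wilkerB x) /
        ((k - 1) * (wilkerA x / (wilkerA x + wilkerB x)) + 1) := by
  have hAB := wilkerA_add_wilkerB_pos hx
  rw [div_div]
  congr 1
  field_simp
  ring

theorem sinSubMulCos_sq_mul_lt_subCosMulSin_pow_three (hx : x ∈ Ioc 0 (π / 2)) :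
    sinSubMulCos x ^ 2 * sinSubMulCos (2 * x) < subCosMulSin x ^ 3 := by
  have hx0 := hx.1
  have hP := sinSubMulCos_pos (two_mul_mem_Ioc_pi hx)
  have hQ := subCosMulSin_pos hx0
  have hdouble : x ^ 3 * sinSubMulCos (2 * x) < 6 * subCosMulSin x ^ 2 := by
    have := pow_three_mul_sinSubMulCos_lt (two_mul_mem_Ioc_pi hx)
    rw [← two_mul_subCosMulSin] at this
    linarith
  have key : 6 * (sinSubMulCos x ^ 2 * sinSubMulCos (2 * x)) < 6 * subCosMulSin x ^ 3 :=
    calc 6 * (sinSubMulCos x ^ 2 * sinSubMulCos (2 * x))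
        = 6 * sinSubMulCos x ^ 2 * sinSubMulCos (2 * x) := by ring
      _ ≤ x ^ 3 * subCosMulSin x * sinSubMulCos (2 * x) :=
        mul_le_mul_of_nonneg_right (six_mul_sinSubMulCos_sq_le hx0.le) hP.le
      _ = subCosMulSin x * (x ^ 3 * sinSubMulCos (2 * x)) := by ring
      _ < subCosMulSin x * (6 * subCosMulSin x ^ 2) := by gcongr
      _ = 6 * subCosMulSin x ^ 3 := by ring
  linarith

theorem hasDerivAt_two_mul_div_subCosMulSin (hQ : subCosMulSin x ≠ 0) :
    HasDerivAt (fun x => 2 * x / subCosMulSin x)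
      (-sinSubMulCos (2 * x) / subCosMulSin x ^ 2) x := by
  refine (((hasDerivAt_id' x).const_mul 2).fun_div (hasDerivAt_subCosMulSin x) hQ).congr_deriv ?_
  congr 1
  rw [sinSubMulCos, subCosMulSin, sin_two_mul, cos_two_mul]
  linear_combination -4 * x * sin_sq_add_cos_sq x

theorem hasDerivAt_sin_div_sinSubMulCos (hP : sinSubMulCos x ≠ 0) :
    HasDerivAt (fun x => sin x / sinSubMulCos x) (-subCosMulSin x / sinSubMulCos x ^ 2) x := by
  refine ((hasDerivAt_sin x).fun_div (hasDerivAt_sinSubMulCos x) hP).congr_deriv ?_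
  congr 1
  rw [sinSubMulCos, subCosMulSin]
  linear_combination -x * sin_sq_add_cos_sq x

end

theorem strictMonoOn_wilkerC_div_wilkerA_add_wilkerB :
    StrictMonoOn (fun x => wilkerC x / (wilkerA x + wilkerB x)) (Ioc 0 (π / 2)) := by
  refine StrictMonoOn.congr ?_ fun x hx => (wilkerC_div_wilkerA_add_wilkerB hx).symm
  have hderiv (x : ℝ) (hx : x ∈ Ioc 0 (π / 2)) :=
    (hasDerivAt_two_mul_div_subCosMulSin (subCosMulSin_pos hx.1).ne').fun_sub
      (hasDerivAt_sin_div_sinSubMulCos (sinSubMulCos_pos (mem_Ioc_pi hx)).ne')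
  refine strictMonoOn_of_hasDerivWithinAt_pos (convex_Ioc _ _)
    (fun x hx => (hderiv x hx).continuousAt.continuousWithinAt)
    (fun x hx => (hderiv x (interior_subset hx)).hasDerivWithinAt) fun x hx => ?_
  have hx' := interior_subset hx
  have hP := sinSubMulCos_pos (mem_Ioc_pi hx')
  have hQ := subCosMulSin_pos hx'.1
  rw [neg_div, neg_div, sub_neg_eq_add, neg_add_eq_sub, sub_pos,
    div_lt_div_iff₀ (by positivity) (by positivity)]
  linarith [sinSubMulCos_sq_mul_lt_subCosMulSin_pow_three hx']

theorem wilkerC_div_wilkerA_add_wilkerB_lt_one {x : ℝ} (hx : x ∈ Ioo 0 (π / 2)) :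
    wilkerC x / (wilkerA x + wilkerB x) < 1 := by
  have hend : wilkerC (π / 2) / (wilkerA (π / 2) + wilkerB (π / 2)) = 1 := by
    rw [div_eq_one_iff_eq (wilkerA_add_wilkerB_pos (right_mem_Ioc.2 pi_div_two_pos)).ne']
    simp [wilkerA, wilkerB, wilkerC, sinSubMulCos, subCosMulSin]
    ring
  exact hend ▸ strictMonoOn_wilkerC_div_wilkerA_add_wilkerB (Ioo_subset_Ioc_self hx)
    (right_mem_Ioc.2 pi_div_two_pos) hx.2

theorem four_fifths_lt_wilkerC_div_wilkerA_add_wilkerB {x : ℝ} (hx : x ∈ Ioc 0 (π / 2)) :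
    4 / 5 < wilkerC x / (wilkerA x + wilkerB x) := by
  have hx0 := hx.1
  have hP := sinSubMulCos_pos (mem_Ioc_pi hx)
  have hQ := subCosMulSin_pos hx0
  have hsinPade : 3 / x ^ 2 + 3 / 5 < 2 * x / subCosMulSin x := by
    have := mul_sixty_sub_lt_mul_sin (two_mul_mem_Ioc_pi hx)
    rw [show sin (2 * x) = 2 * x - 2 * subCosMulSin x by linarith [two_mul_subCosMulSin x]] at this
    rw [div_add_div _ _ (by positivity) (by positivity),
      div_lt_div_iff₀ (by positivity) (by positivity)]
    linarith
  have htanPade : sin x / sinSubMulCos x < 3 / x ^ 2 - 1 / 5 := by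
    have := five_mul_sq_mul_sin_lt (mem_Ioc_pi hx)
    rw [div_sub_div _ _ (by positivity) (by positivity),
      div_lt_div_iff₀ (by positivity) (by positivity)]
    linarith
  rw [wilkerC_div_wilkerA_add_wilkerB hx]
  linarith

theorem wilkerC_pos {x : ℝ} (hx : x ∈ Ioc 0 (π / 2)) : 0 < wilkerC x := by
  have := four_fifths_lt_wilkerC_div_wilkerA_add_wilkerB hx
  exact (div_pos_iff_of_pos_right (wilkerA_add_wilkerB_pos hx)).1 (by linarith)

theorem hasDerivAt_cos_mul_sinSubMulCos_div {x : ℝ} (hx : x ≠ 0) (hsin : sin x ≠ 0) :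
    HasDerivAt (fun x => cos x * sinSubMulCos x / (x * sin x ^ 2))
      (-wilkerC x / (x ^ 3 * sin x ^ 5)) x := by
  refine (((hasDerivAt_cos x).fun_mul (hasDerivAt_sinSubMulCos x)).fun_div
    ((hasDerivAt_id' x).fun_mul ((hasDerivAt_sin x).fun_pow 2)) (by positivity)).congr_deriv ?_
  rw [sinSubMulCos, wilkerC]
  field_simp
  linear_combination (-x * sin x ^ 2 + 2 * x ^ 2 * sin x * cos x) * sin_sq_add_cos_sq x

theorem antitoneOn_wilkerA_div_wilkerA_add_wilkerB :
    AntitoneOn (fun x => wilkerA x / (wilkerA x + wilkerB x)) (Ioc 0 (π / 2)) := by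
  refine AntitoneOn.congr ?_ fun x hx => (wilkerA_div_wilkerA_add_wilkerB hx).symm
  have hderiv (x : ℝ) (hx : x ∈ Ioc 0 (π / 2)) :=
    hasDerivAt_cos_mul_sinSubMulCos_div hx.1.ne' (sin_pos_of_mem_Ioc_pi_div_two hx).ne'
  refine antitoneOn_of_hasDerivWithinAt_nonpos (convex_Ioc _ _)
    (fun x hx => (hderiv x hx).continuousAt.continuousWithinAt)
    (fun x hx => (hderiv x (interior_subset hx)).hasDerivWithinAt) fun x hx => ?_
  have hx' := interior_subset hx
  have hsin := sin_pos_of_mem_Ioc_pi_div_two hx'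
  have hx0 := hx'.1
  exact div_nonpos_of_nonpos_of_nonneg (neg_nonpos.2 (wilkerC_pos hx').le) (by positivity)

theorem wilkerA_div_wilkerA_add_wilkerB_nonneg {x : ℝ} (hx : x ∈ Ioc 0 (π / 2)) :
    0 ≤ wilkerA x / (wilkerA x + wilkerB x) := by
  have hcos : 0 ≤ cos x := cos_nonneg_of_mem_Icc ⟨by linarith [hx.1, pi_pos], hx.2⟩
  have hQ := subCosMulSin_pos hx.1
  exact div_nonneg (by rw [wilkerA]; positivity) (wilkerA_add_wilkerB_pos hx).le

theorem wilkerA_div_wilkerA_add_wilkerB_lt_one_third {x : ℝ} (hx : x ∈ Ioc 0 (π / 2)) :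
    wilkerA x / (wilkerA x + wilkerB x) < 1 / 3 := by
  have hsin := sin_pos_of_mem_Ioc_pi_div_two hx
  have hx0 := hx.1
  have hcusa := three_mul_sin_lt_mul_two_add_cos (two_mul_mem_Ioc_pi hx)
  rw [sin_two_mul, cos_two_mul] at hcusa
  rw [wilkerA_div_wilkerA_add_wilkerB hx, div_lt_div_iff₀ (by positivity) (by norm_num),
    sinSubMulCos]
  linear_combination hcusa / 2 - x * sin_sq_add_cos_sq x

theorem strictMonoOn_wilkerC_div {k : ℝ} (hk : 1 ≤ k) :
    StrictMonoOn (fun x => wilkerC x / (k * wilkerA x + wilkerB x)) (Ioc 0 (π / 2)) := by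
  intro x hx y hy hxy
  have hnum := strictMonoOn_wilkerC_div_wilkerA_add_wilkerB hx hy hxy
  have hnum_pos := four_fifths_lt_wilkerC_div_wilkerA_add_wilkerB hy
  have hweight := mul_nonneg (sub_nonneg.2 hk) (wilkerA_div_wilkerA_add_wilkerB_nonneg hy)
  have hden := mul_le_mul_of_nonneg_left
    (antitoneOn_wilkerA_div_wilkerA_add_wilkerB hx hy hxy.le) (sub_nonneg.2 hk)
  simp only [wilkerC_div_eq k hx, wilkerC_div_eq k hy]
  exact div_lt_div₀ hnum (by simpa using hden) (by linarith) (by positivity)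

theorem wilkerC_div_lt_one {k x : ℝ} (hk : 1 ≤ k) (hx : x ∈ Ioo 0 (π / 2)) :
    wilkerC x / (k * wilkerA x + wilkerB x) < 1 := by
  have hx' := Ioo_subset_Ioc_self hx
  have hweight := mul_nonneg (sub_nonneg.2 hk) (wilkerA_div_wilkerA_add_wilkerB_nonneg hx')
  rw [wilkerC_div_eq k hx', div_lt_one (by positivity)]
  linarith [wilkerC_div_wilkerA_add_wilkerB_lt_one hx]

-- The left-hand side is the limit of the quotient at `0`.
theorem lt_wilkerC_div {k x : ℝ} (hk : 1 ≤ k) (hx : x ∈ Ioc 0 (π / 2)) :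
    12 / (5 * (k + 2)) < wilkerC x / (k * wilkerA x + wilkerB x) := by
  have hk' : 0 ≤ k - 1 := sub_nonneg.2 hk
  have hnum := four_fifths_lt_wilkerC_div_wilkerA_add_wilkerB hx
  have hnonneg := mul_nonneg hk' (wilkerA_div_wilkerA_add_wilkerB_nonneg hx)
  have hden := mul_le_mul_of_nonneg_left (wilkerA_div_wilkerA_add_wilkerB_lt_one_third hx).le hk'
  rw [wilkerC_div_eq k hx]
  calc 12 / (5 * (k + 2)) = 4 / 5 / ((k - 1) * (1 / 3) + 1) := by
        rw [div_div, div_eq_div_iff (by positivity) (by positivity)]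
        ring
    _ < _ := div_lt_div₀ hnum (by gcongr) (by linarith) (by positivity)

theorem wilker_lemma_ABC (k : ℝ) (hk : 1 ≤ k) :
    StrictMonoOn (fun x : ℝ =>
      (x * sin x ^ 2 * (-2 * x ^ 2 * cos x + x * sin x + cos x * sin x ^ 2)) /
        (k * (cos x * (sin x - x * cos x) ^ 2 * (x - cos x * sin x)) +
          (x - cos x * sin x) ^ 2 * (sin x - x * cos x))) (Ioo 0 (π / 2)) ∧
    ∀ x ∈ Ioo 0 (π / 2),
      5 / (12 * (k + 2)) <
        (x * sin x ^ 2 * (-2 * x ^ 2 * cos x + x * sin x + cos x * sin x ^ 2)) /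
          (k * (cos x * (sin x - x * cos x) ^ 2 * (x - cos x * sin x)) +
            (x - cos x * sin x) ^ 2 * (sin x - x * cos x)) ∧
      (x * sin x ^ 2 * (-2 * x ^ 2 * cos x + x * sin x + cos x * sin x ^ 2)) /
          (k * (cos x * (sin x - x * cos x) ^ 2 * (x - cos x * sin x)) +
            (x - cos x * sin x) ^ 2 * (sin x - x * cos x)) < 1 := by
  have hweak : 5 / (12 * (k + 2)) < 12 / (5 * (k + 2)) := by
    rw [div_lt_div_iff₀ (by positivity) (by positivity)]
    linarith
  exact ⟨(strictMonoOn_wilkerC_div hk).mono Ioo_subset_Ioc_self, fun x hx =>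
    ⟨hweak.trans (lt_wilkerC_div hk (Ioo_subset_Ioc_self hx)), wilkerC_div_lt_one hk hx⟩⟩
end

section
/- Define, for x ∈ (0, ∞), E(x) = cosh(x)·(sinh(x) − x·cosh(x))²·(x − cosh(x)·sinh(x)), F(x) = (sinh(x) − x·cosh(x))·(x − cosh(x)·sinh(x))², and G(x) = x·sinh²(x)·(2x²·cosh(x) − x·sinh(x) − cosh(x)·sinh²(x)). Then: (i) for each fixed real k ≥ 1, the function x ↦ G(x)/(k·E(x) + F(x)) is strictly decreasing on (0, ∞); (ii) for each fixed real k < −2, the function x ↦ G(x)/(k·E(x) + F(x)) is strictly increasing on (0, ∞); and in both cases, for every x ∈ (0, ∞), min(0, 12/(5(k+2))) < G(x)/(k·E(x) + F(x)) < max(0, 12/(5(k+2))). -/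
open Real Set

/-!
Write `A = x cosh x - sinh x`, `B = cosh x sinh x - x` and
`D = cosh x sinh² x + x sinh x - 2x² cosh x`. Since `A cosh x + B = x sinh² x`, the quotient
`G / (kE + F)` is the reciprocal of `(AB / D) * (k - (k - 1) T)` with `T = B / (x sinh² x)`.
By the Biernacki–Krzyż criterion (a quotient of power series is monotone when the quotients of
their coefficients are), `AB / D` increases from its limit `5/4` at `0`, and `T` decreases from
its limit `2/3`. For `k ≥ 1` both factors are positive and nondecreasing; for `k < -2` the second
one is negative and decreasing.
-/

section PowerSeries

theorem pow_mul_pow_le_pow_mul_pow {R : Type*} [CommSemiring R] [PartialOrder R]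
    [IsOrderedRing R] {x y : R} (hx : 0 ≤ x) (hxy : x ≤ y) {i j : ℕ} (hij : i ≤ j) :
    y ^ i * x ^ j ≤ x ^ i * y ^ j := by
  obtain ⟨d, rfl⟩ := Nat.exists_eq_add_of_le hij
  have hy : 0 ≤ y := hx.trans hxy
  calc y ^ i * x ^ (i + d) = x ^ i * y ^ i * x ^ d := by ring
    _ ≤ x ^ i * y ^ i * y ^ d := by gcongr
    _ = x ^ i * y ^ (i + d) := by ring

theorem hasSum_mul_zero_pow {R : Type*} [Semiring R] [TopologicalSpace R] (a : ℕ → R) :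
    HasSum (fun n => a n * 0 ^ n) (a 0) := by
  simpa using hasSum_single (f := fun n => a n * 0 ^ n) 0 fun n hn => by simp [hn]

theorem hasSum_nat_add_mul_pow {𝕜 : Type*} [Field 𝕜] [TopologicalSpace 𝕜] [IsTopologicalRing 𝕜]
    {c : ℕ → 𝕜} {k : ℕ} {x s : 𝕜} (hx : x ≠ 0) (hc : ∀ n < k, c n = 0)
    (h : HasSum (fun n => c n * x ^ n) s) :
    HasSum (fun n => c (n + k) * x ^ n) (s / x ^ k) := by
  have hzero : ∑ n ∈ Finset.range k, c n * x ^ n = 0 :=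
    Finset.sum_eq_zero fun n hn => by rw [hc n (Finset.mem_range.1 hn), zero_mul]
  have htail := ((hasSum_nat_add_iff' k).2 h).div_const (x ^ k)
  rw [hzero, sub_zero] at htail
  refine htail.congr_fun fun n => ?_
  rw [pow_add, ← mul_assoc, mul_div_cancel_right₀ _ (pow_ne_zero k hx)]

theorem hasSum_mul_prod {ι κ : Type*} {u : ι → ℝ} {v : κ → ℝ} {s t : ℝ} (hu : HasSum u s)
    (hv : HasSum v t) : HasSum (fun p : ι × κ => u p.1 * v p.2) (s * t) :=
  hu.mul hv (summable_mul_of_summable_norm hu.summable.norm hv.summable.norm)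

variable {a b : ℕ → ℝ} {x y fx fy gx gy : ℝ}

theorem pos_of_hasSum_pow (hb : ∀ n, 0 < b n) (hx : 0 ≤ x)
    (hgx : HasSum (fun n => b n * x ^ n) gx) : 0 < gx := by
  refine hasSum_lt (i := 0) (fun n => ?_) ?_ hasSum_zero hgx
  · have := hb n
    positivity
  · simpa using hb 0

/-- The Biernacki–Krzyż criterion. -/
theorem div_lt_div_of_hasSum_pow (hb : ∀ n, 0 < b n) (hab : StrictMono fun n => a n / b n)
    (hx : 0 ≤ x) (hxy : x < y)
    (hfx : HasSum (fun n => a n * x ^ n) fx) (hfy : HasSum (fun n => a n * y ^ n) fy)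
    (hgx : HasSum (fun n => b n * x ^ n) gx) (hgy : HasSum (fun n => b n * y ^ n) gy) :
    fx / gx < fy / gy := by
  rw [div_lt_div_iff₀ (pos_of_hasSum_pow hb hx hgx) (pos_of_hasSum_pow hb (hx.trans hxy.le) hgy)]
  have hdiff := (hasSum_mul_prod hfy hgx).sub (hasSum_mul_prod hfx hgy)
  -- Symmetrizing the double series in its two indices makes every term nonnegative.
  have hsymm := hdiff.add ((Equiv.prodComm ℕ ℕ).hasSum_iff.2 hdiff)
  have hterm (i j : ℕ) :
      a i * y ^ i * (b j * x ^ j) - a i * x ^ i * (b j * y ^ j) +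
        (a j * y ^ j * (b i * x ^ i) - a j * x ^ j * (b i * y ^ i)) =
      (a j * b i - a i * b j) * (x ^ i * y ^ j - y ^ i * x ^ j) := by ring
  have hcross {i j : ℕ} (hij : i ≤ j) : 0 ≤ a j * b i - a i * b j :=
    sub_nonneg.2 ((div_le_div_iff₀ (hb i) (hb j)).1 (hab.monotone hij))
  have hpow {i j : ℕ} (hij : i ≤ j) : 0 ≤ x ^ i * y ^ j - y ^ i * x ^ j :=
    sub_nonneg.2 (pow_mul_pow_le_pow_mul_pow hx hxy.le hij)
  have hpos : 0 < fy * gx - fx * gy + (fy * gx - fx * gy) := by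
    refine hasSum_lt (i := (0, 1)) (fun ⟨i, j⟩ => ?_) ?_ hasSum_zero hsymm
    · refine le_of_le_of_eq ?_ (hterm i j).symm
      obtain hij | hji := le_total i j
      · exact mul_nonneg (hcross hij) (hpow hij)
      · linarith [mul_nonneg (hcross hji) (hpow hji)]
    · refine lt_of_lt_of_eq (mul_pos ?_ ?_) (hterm 0 1).symm
      · exact sub_pos.2 ((div_lt_div_iff₀ (hb 0) (hb 1)).1 (hab zero_lt_one))
      · simpa using hxy
  linarith

theorem div_lt_div_of_hasSum_pow_of_strictAnti (hb : ∀ n, 0 < b n)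
    (hab : StrictAnti fun n => a n / b n) (hx : 0 ≤ x) (hxy : x < y)
    (hfx : HasSum (fun n => a n * x ^ n) fx) (hfy : HasSum (fun n => a n * y ^ n) fy)
    (hgx : HasSum (fun n => b n * x ^ n) gx) (hgy : HasSum (fun n => b n * y ^ n) gy) :
    fy / gy < fx / gx := by
  have h := div_lt_div_of_hasSum_pow (a := fun n => -a n) hb
    (by simpa only [neg_div] using hab.neg) hx hxy
    (by simpa only [neg_mul] using hfx.neg) (by simpa only [neg_mul] using hfy.neg) hgx hgy
  rwa [neg_div, neg_div, neg_lt_neg_iff] at h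

end PowerSeries

section HyperbolicSeries

open scoped Nat

theorem hasSum_mul_sinh (z : ℝ) :
    HasSum (fun n : ℕ => 2 * n * (z ^ (2 * n) / (2 * n)!)) (z * sinh z) := by
  rw [← hasSum_nat_add_iff' 1]
  convert! (hasSum_sinh z).mul_left z using 1
  · ext n
    rw [show 2 * (n + 1) = 2 * n + 1 + 1 by ring, Nat.factorial_succ (2 * n + 1)]
    push_cast
    field_simp
    ring
  · simp

theorem hasSum_sq_mul_cosh (z : ℝ) :
    HasSum (fun n : ℕ => 2 * n * (2 * n - 1) * (z ^ (2 * n) / (2 * n)!)) (z ^ 2 * cosh z) := by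
  rw [← hasSum_nat_add_iff' 1]
  convert! (hasSum_cosh z).mul_left (z ^ 2) using 1
  · ext n
    rw [show 2 * (n + 1) = 2 * n + 1 + 1 by ring, Nat.factorial_succ (2 * n + 1),
      Nat.factorial_succ (2 * n)]
    push_cast
    field_simp
    ring
  · simp

theorem hasSum_sinh_sub_self_div {z : ℝ} (hz : z ≠ 0) :
    HasSum (fun n : ℕ => 1 / (2 * n + 3)! * (z ^ 2) ^ n) ((sinh z - z) / z ^ 3) := by
  have h := ((hasSum_nat_add_iff' 1).2 (hasSum_sinh z)).div_const (z ^ 3)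
  convert! h using 1
  · ext n
    rw [show 2 * (n + 1) + 1 = 2 * n + 3 by ring]
    field_simp
    ring
  · simp

theorem hasSum_cosh_sub_one_div {z : ℝ} (hz : z ≠ 0) :
    HasSum (fun n : ℕ => 1 / (2 * n + 2)! * (z ^ 2) ^ n) ((cosh z - 1) / z ^ 2) := by
  have h := ((hasSum_nat_add_iff' 1).2 (hasSum_cosh z)).div_const (z ^ 2)
  convert! h using 1
  · ext n
    rw [show 2 * (n + 1) = 2 * n + 2 by ring]
    field_simp
    ring
  · simp

end HyperbolicSeries

namespace Wilker

open scoped Nat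

/-- The function `A * B` of the header, the numerator of the increasing factor `A * B / D`. -/
noncomputable def numer (x : ℝ) : ℝ := (x * cosh x - sinh x) * (cosh x * sinh x - x)

/-- The function `D` of the header, the denominator of the increasing factor `A * B / D`. -/
noncomputable def denom (x : ℝ) : ℝ := cosh x * sinh x ^ 2 + x * sinh x - 2 * x ^ 2 * cosh x

/-- The function `T` of the header, the only part of the second factor that depends on `x`. -/
noncomputable def weight (x : ℝ) : ℝ := (cosh x * sinh x - x) / (x * sinh x ^ 2)

/-- The reciprocal of the quotient `G / (k * E + F)` on `(0, ∞)`. -/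
noncomputable def recipQuotient (k x : ℝ) : ℝ := numer x / denom x * (k - (k - 1) * weight x)

/-- The coefficient of `x ^ (2 * n)` in `4 * numer x`, multiplied by `(2 * n)!` to clear the
factorials. -/
noncomputable def numerCoeff (n : ℕ) : ℝ := (2 * n / 3 - 1) * 9 ^ n + 1 + 18 * n - 16 * n ^ 2

/-- The coefficient of `x ^ (2 * n)` in `4 * denom x`, multiplied by `(2 * n)!` to clear the
factorials. -/
noncomputable def denomCoeff (n : ℕ) : ℝ := 9 ^ n - 1 + 24 * n - 32 * n ^ 2

section Coefficients

theorem numerCoeff_eq_zero {n : ℕ} (hn : n < 3) : numerCoeff n = 0 := by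
  interval_cases n <;> norm_num [numerCoeff]

theorem denomCoeff_eq_zero {n : ℕ} (hn : n < 3) : denomCoeff n = 0 := by
  interval_cases n <;> norm_num [denomCoeff]

theorem add_one_pow_three_le_nine_pow (m : ℕ) : ((m : ℝ) + 1) ^ 3 ≤ 9 ^ m := by
  have h : (m : ℝ) + 1 ≤ 2 ^ m := mod_cast Nat.lt_two_pow_self
  calc ((m : ℝ) + 1) ^ 3 ≤ (2 ^ m) ^ 3 := by gcongr
    _ = 8 ^ m := by rw [pow_right_comm]; norm_num
    _ ≤ 9 ^ m := by gcongr; norm_num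

theorem denomCoeff_add_three_pos (m : ℕ) : 0 < denomCoeff (m + 3) := by
  have heq : denomCoeff (m + 3) = 729 * 9 ^ m - (32 * m ^ 2 + 168 * m + 217) := by
    simp only [denomCoeff]
    push_cast
    ring
  have hpoly : 0 < 729 * ((m : ℝ) + 1) ^ 3 - (32 * m ^ 2 + 168 * m + 217) := by
    ring_nf
    positivity
  linarith [add_one_pow_three_le_nine_pow m]

theorem lt_numerCoeff_div_denomCoeff (m : ℕ) :
    2 / 3 * (m : ℝ) + 1 < numerCoeff (m + 3) / denomCoeff (m + 3) := by
  rw [lt_div_iff₀ (denomCoeff_add_three_pos m), ← sub_pos]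
  have hdiff : numerCoeff (m + 3) - (2 / 3 * m + 1) * denomCoeff (m + 3) =
      64 / 3 * (m : ℝ) ^ 3 + 128 * m ^ 2 + 704 / 3 * m + 128 := by
    simp only [numerCoeff, denomCoeff]
    push_cast
    ring
  rw [hdiff]
  positivity

theorem numerCoeff_div_denomCoeff_le (m : ℕ) :
    numerCoeff (m + 3) / denomCoeff (m + 3) ≤ 2 / 3 * m + 5 / 4 := by
  rw [div_le_iff₀ (denomCoeff_add_three_pos m)]
  have hdiff : (2 / 3 * m + 5 / 4) * denomCoeff (m + 3) - numerCoeff (m + 3) =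
      729 / 4 * 9 ^ m - (64 / 3 * m ^ 3 + 136 * m ^ 2 + 830 / 3 * m + 729 / 4) := by
    simp only [numerCoeff, denomCoeff]
    push_cast
    ring
  have hpoly : 0 ≤ 729 / 4 * ((m : ℝ) + 1) ^ 3 -
      (64 / 3 * m ^ 3 + 136 * m ^ 2 + 830 / 3 * m + 729 / 4) := by
    ring_nf
    positivity
  linarith [add_one_pow_three_le_nine_pow m]

theorem strictMono_numerCoeff_div_denomCoeff :
    StrictMono fun m => numerCoeff (m + 3) / denomCoeff (m + 3) := by
  refine strictMono_nat_of_lt_succ fun m => ?_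
  calc numerCoeff (m + 3) / denomCoeff (m + 3) ≤ 2 / 3 * m + 5 / 4 :=
        numerCoeff_div_denomCoeff_le m
    _ < 2 / 3 * ((m + 1 : ℕ) : ℝ) + 1 := by push_cast; linarith
    _ < _ := lt_numerCoeff_div_denomCoeff (m + 1)

end Coefficients

section NumerDivDenom

theorem four_mul_numer (x : ℝ) :
    4 * numer x = 1 / 3 * (3 * x * sinh (3 * x)) + 5 * (x * sinh x) - 4 * (x ^ 2 * cosh x) -
      cosh (3 * x) + cosh x := by
  rw [numer, sinh_three_mul, cosh_three_mul]
  linear_combination (4 * x * sinh x + 4 * cosh x) * cosh_sq x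

theorem four_mul_denom (x : ℝ) :
    4 * denom x = cosh (3 * x) - cosh x + 4 * (x * sinh x) - 8 * (x ^ 2 * cosh x) := by
  rw [denom, cosh_three_mul]
  linear_combination (-4 * cosh x) * cosh_sq x

theorem hasSum_numer (x : ℝ) :
    HasSum (fun n => numerCoeff n / (2 * n)! * (x ^ 2) ^ n) (4 * numer x) := by
  rw [four_mul_numer]
  convert! (((((hasSum_mul_sinh (3 * x)).mul_left (1 / 3)).add
    ((hasSum_mul_sinh x).mul_left 5)).sub ((hasSum_sq_mul_cosh x).mul_left 4)).sub
    (hasSum_cosh (3 * x))).add (hasSum_cosh x) using 2 with n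
  have hpow : (3 * x) ^ (2 * n) = 9 ^ n * x ^ (2 * n) := by rw [mul_pow, pow_mul]; norm_num
  rw [hpow, numerCoeff]
  ring

theorem hasSum_denom (x : ℝ) :
    HasSum (fun n => denomCoeff n / (2 * n)! * (x ^ 2) ^ n) (4 * denom x) := by
  rw [four_mul_denom]
  convert! (((hasSum_cosh (3 * x)).sub (hasSum_cosh x)).add
    ((hasSum_mul_sinh x).mul_left 4)).sub ((hasSum_sq_mul_cosh x).mul_left 8) using 2 with n
  have hpow : (3 * x) ^ (2 * n) = 9 ^ n * x ^ (2 * n) := by rw [mul_pow, pow_mul]; norm_num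
  rw [hpow, denomCoeff]
  ring

variable {x : ℝ}

theorem hasSum_numer_div (hx : x ≠ 0) :
    HasSum (fun n => numerCoeff (n + 3) / (2 * (n + 3))! * (x ^ 2) ^ n)
      (4 * numer x / (x ^ 2) ^ 3) :=
  hasSum_nat_add_mul_pow (c := fun n => numerCoeff n / (2 * n)!) (pow_ne_zero 2 hx)
    (fun n hn => by rw [numerCoeff_eq_zero hn, zero_div]) (hasSum_numer x)

theorem hasSum_denom_div (hx : x ≠ 0) :
    HasSum (fun n => denomCoeff (n + 3) / (2 * (n + 3))! * (x ^ 2) ^ n)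
      (4 * denom x / (x ^ 2) ^ 3) :=
  hasSum_nat_add_mul_pow (c := fun n => denomCoeff n / (2 * n)!) (pow_ne_zero 2 hx)
    (fun n hn => by rw [denomCoeff_eq_zero hn, zero_div]) (hasSum_denom x)

theorem denomCoeff_div_factorial_pos (n : ℕ) : 0 < denomCoeff (n + 3) / (2 * (n + 3))! :=
  div_pos (denomCoeff_add_three_pos n) (by positivity)

theorem strictMono_numerCoeff_div_factorial_div :
    StrictMono fun n =>
      numerCoeff (n + 3) / (2 * (n + 3))! / (denomCoeff (n + 3) / (2 * (n + 3))!) := by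
  convert! strictMono_numerCoeff_div_denomCoeff using 2
  exact div_div_div_cancel_right₀ (by positivity) _ _

theorem four_mul_numer_div_div (hx : x ≠ 0) :
    4 * numer x / (x ^ 2) ^ 3 / (4 * denom x / (x ^ 2) ^ 3) = numer x / denom x := by
  rw [div_div_div_cancel_right₀ (by positivity), mul_div_mul_left _ _ four_ne_zero]

theorem strictMonoOn_numer_div_denom : StrictMonoOn (fun x => numer x / denom x) (Ioi 0) := by
  intro x hx y hy hxy
  have h := div_lt_div_of_hasSum_pow denomCoeff_div_factorial_pos
    strictMono_numerCoeff_div_factorial_div (sq_nonneg x)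
    (pow_lt_pow_left₀ hxy (le_of_lt hx) two_ne_zero)
    (hasSum_numer_div (ne_of_gt hx)) (hasSum_numer_div (ne_of_gt hy))
    (hasSum_denom_div (ne_of_gt hx)) (hasSum_denom_div (ne_of_gt hy))
  rwa [four_mul_numer_div_div (ne_of_gt hx), four_mul_numer_div_div (ne_of_gt hy)] at h

theorem five_fourths_lt_numer_div_denom (hx : 0 < x) : 5 / 4 < numer x / denom x := by
  have h := div_lt_div_of_hasSum_pow denomCoeff_div_factorial_pos
    strictMono_numerCoeff_div_factorial_div le_rfl (pow_pos hx 2)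
    (hasSum_mul_zero_pow _) (hasSum_numer_div hx.ne')
    (hasSum_mul_zero_pow _) (hasSum_denom_div hx.ne')
  rw [four_mul_numer_div_div hx.ne'] at h
  convert! h using 1
  norm_num [numerCoeff, denomCoeff, Nat.factorial]

end NumerDivDenom

section Weight

variable {x : ℝ}

theorem weight_eq_div (x : ℝ) :
    weight x = 2 * ((sinh (2 * x) - 2 * x) / (2 * x) ^ 3 / ((cosh (2 * x) - 1) / (2 * x) ^ 2)) := by
  have hcosh : cosh (2 * x) - 1 = 2 * sinh x ^ 2 := by
    rw [cosh_two_mul, cosh_sq]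
    ring
  rw [weight, hcosh, sinh_two_mul]
  field_simp

theorem strictAnti_one_div_factorial_div :
    StrictAnti fun n : ℕ => 1 / (2 * n + 3)! / (1 / (2 * n + 2)! : ℝ) := by
  have hratio (n : ℕ) : 1 / (2 * n + 3)! / (1 / (2 * n + 2)! : ℝ) = (2 * n + 3 : ℝ)⁻¹ := by
    rw [Nat.factorial_succ (2 * n + 2)]
    push_cast
    field_simp
    ring
  intro m n hmn
  simp only [hratio]
  gcongr

theorem strictAntiOn_weight : StrictAntiOn weight (Ioi 0) := by
  intro x hx y hy hxy
  rw [mem_Ioi] at hx hy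
  rw [weight_eq_div, weight_eq_div]
  have h2x : 2 * x ≠ 0 := by positivity
  have h2y : 2 * y ≠ 0 := by positivity
  have hsq : (2 * x) ^ 2 < (2 * y) ^ 2 := by gcongr
  have h := div_lt_div_of_hasSum_pow_of_strictAnti (fun n => by positivity)
    strictAnti_one_div_factorial_div (sq_nonneg (2 * x)) hsq
    (hasSum_sinh_sub_self_div h2x) (hasSum_sinh_sub_self_div h2y)
    (hasSum_cosh_sub_one_div h2x) (hasSum_cosh_sub_one_div h2y)
  linarith

theorem weight_lt_two_thirds (hx : 0 < x) : weight x < 2 / 3 := by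
  have h2x : 2 * x ≠ 0 := by positivity
  have h := div_lt_div_of_hasSum_pow_of_strictAnti (fun n => by positivity)
    strictAnti_one_div_factorial_div le_rfl (by positivity : 0 < (2 * x) ^ 2)
    (hasSum_mul_zero_pow _) (hasSum_sinh_sub_self_div h2x)
    (hasSum_mul_zero_pow _) (hasSum_cosh_sub_one_div h2x)
  have hinit : 1 / (2 * 0 + 3)! / (1 / (2 * 0 + 2)! : ℝ) = 1 / 3 := by norm_num [Nat.factorial]
  rw [hinit] at h
  rw [weight_eq_div]
  linarith

end Weight

section RecipQuotient

variable {k x : ℝ}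

theorem quotient_eq_inv_recipQuotient (k : ℝ) (hx : 0 < x) :
    (x * sinh x ^ 2 * (2 * x ^ 2 * cosh x - x * sinh x - cosh x * sinh x ^ 2)) /
        (k * (cosh x * (sinh x - x * cosh x) ^ 2 * (x - cosh x * sinh x)) +
          (sinh x - x * cosh x) * (x - cosh x * sinh x) ^ 2) = (recipQuotient k x)⁻¹ := by
  have hden : x * sinh x ^ 2 ≠ 0 := by
    have := sinh_pos_iff.2 hx
    positivity
  have hsplit : x * sinh x ^ 2 =
      cosh x * (x * cosh x - sinh x) + (cosh x * sinh x - x) := by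
    linear_combination (-x) * cosh_sq x
  have hnum : x * sinh x ^ 2 * (2 * x ^ 2 * cosh x - x * sinh x - cosh x * sinh x ^ 2) =
      -(x * sinh x ^ 2 * denom x) := by
    rw [denom]
    ring
  have hfactor : k - (k - 1) * weight x =
      (k * (cosh x * (x * cosh x - sinh x)) + (cosh x * sinh x - x)) / (x * sinh x ^ 2) := by
    rw [weight, eq_div_iff hden, sub_mul, mul_assoc, div_mul_cancel₀ _ hden, hsplit]
    ring
  rw [recipQuotient, hfactor, div_mul_div_comm, inv_div, hnum, ← neg_div_neg_eq, neg_neg, numer]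
  congr 1 <;> ring

theorem le_sub_mul_weight (hk : 1 ≤ k) (hx : 0 < x) : (k + 2) / 3 ≤ k - (k - 1) * weight x := by
  nlinarith [weight_lt_two_thirds hx]

theorem sub_mul_weight_lt (hk : k < 1) (hx : 0 < x) : k - (k - 1) * weight x < (k + 2) / 3 := by
  nlinarith [weight_lt_two_thirds hx]

theorem strictMonoOn_recipQuotient (hk : 1 ≤ k) : StrictMonoOn (recipQuotient k) (Ioi 0) := by
  intro x hx y hy hxy
  have hweight := mul_le_mul_of_nonneg_left (strictAntiOn_weight hx hy hxy).le (sub_nonneg.2 hk)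
  have hfactor := le_sub_mul_weight hk hx
  exact mul_lt_mul (strictMonoOn_numer_div_denom hx hy hxy) (by linarith) (by linarith)
    (by linarith [five_fourths_lt_numer_div_denom hy])

theorem lt_recipQuotient (hk : 1 ≤ k) (hx : 0 < x) : 5 * (k + 2) / 12 < recipQuotient k x := by
  calc 5 * (k + 2) / 12 = 5 / 4 * ((k + 2) / 3) := by ring
    _ < recipQuotient k x := mul_lt_mul (five_fourths_lt_numer_div_denom hx)
        (le_sub_mul_weight hk hx) (by linarith) (by linarith [five_fourths_lt_numer_div_denom hx])

theorem strictAntiOn_recipQuotient (hk : k ≤ -2) : StrictAntiOn (recipQuotient k) (Ioi 0) := by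
  intro x hx y hy hxy
  have hweight := mul_lt_mul_of_neg_left (strictAntiOn_weight hx hy hxy)
    (by linarith : k - 1 < 0)
  have hfactor := sub_mul_weight_lt (by linarith : k < 1) hx
  have h := mul_lt_mul (strictMonoOn_numer_div_denom hx hy hxy)
    (by linarith : -(k - (k - 1) * weight x) ≤ -(k - (k - 1) * weight y)) (by linarith)
    (by linarith [five_fourths_lt_numer_div_denom hy])
  rwa [mul_neg, mul_neg, neg_lt_neg_iff] at h

theorem recipQuotient_lt (hk : k ≤ -2) (hx : 0 < x) : recipQuotient k x < 5 * (k + 2) / 12 := by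
  have hfactor := sub_mul_weight_lt (by linarith : k < 1) hx
  calc recipQuotient k x < 5 / 4 * (k - (k - 1) * weight x) :=
        mul_lt_mul_of_neg_right (five_fourths_lt_numer_div_denom hx) (by linarith)
    _ < 5 * (k + 2) / 12 := by linarith

theorem strictAntiOn_inv_recipQuotient (hk : 1 ≤ k) :
    StrictAntiOn (fun x => (recipQuotient k x)⁻¹) (Ioi 0) := fun x hx y hy hxy =>
  inv_strictAnti₀ (by linarith [lt_recipQuotient hk hx]) (strictMonoOn_recipQuotient hk hx hy hxy)

theorem strictMonoOn_inv_recipQuotient (hk : k ≤ -2) :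
    StrictMonoOn (fun x => (recipQuotient k x)⁻¹) (Ioi 0) := fun x hx y hy hxy =>
  (inv_lt_inv_of_neg (by linarith [recipQuotient_lt hk hx])
    (by linarith [recipQuotient_lt hk hy])).2 (strictAntiOn_recipQuotient hk hx hy hxy)

end RecipQuotient

end Wilker

theorem wilker_lemma_EFG :
    (∀ k : ℝ, 1 ≤ k →
      StrictAntiOn (fun x : ℝ =>
        (x * sinh x ^ 2 * (2 * x ^ 2 * cosh x - x * sinh x - cosh x * sinh x ^ 2)) /
          (k * (cosh x * (sinh x - x * cosh x) ^ 2 * (x - cosh x * sinh x)) +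
            (sinh x - x * cosh x) * (x - cosh x * sinh x) ^ 2)) (Ioi 0)) ∧
    (∀ k : ℝ, k < -2 →
      StrictMonoOn (fun x : ℝ =>
        (x * sinh x ^ 2 * (2 * x ^ 2 * cosh x - x * sinh x - cosh x * sinh x ^ 2)) /
          (k * (cosh x * (sinh x - x * cosh x) ^ 2 * (x - cosh x * sinh x)) +
            (sinh x - x * cosh x) * (x - cosh x * sinh x) ^ 2)) (Ioi 0)) ∧
    (∀ k : ℝ, (1 ≤ k ∨ k < -2) → ∀ x ∈ Ioi (0 : ℝ),
      min 0 (12 / (5 * (k + 2))) <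
        (x * sinh x ^ 2 * (2 * x ^ 2 * cosh x - x * sinh x - cosh x * sinh x ^ 2)) /
          (k * (cosh x * (sinh x - x * cosh x) ^ 2 * (x - cosh x * sinh x)) +
            (sinh x - x * cosh x) * (x - cosh x * sinh x) ^ 2) ∧
      (x * sinh x ^ 2 * (2 * x ^ 2 * cosh x - x * sinh x - cosh x * sinh x ^ 2)) /
          (k * (cosh x * (sinh x - x * cosh x) ^ 2 * (x - cosh x * sinh x)) +
            (sinh x - x * cosh x) * (x - cosh x * sinh x) ^ 2) <
        max 0 (12 / (5 * (k + 2)))) := by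
  refine ⟨fun k hk => ?_, fun k hk => ?_, fun k hk x hx => ?_⟩
  · exact (Wilker.strictAntiOn_inv_recipQuotient hk).congr fun x hx =>
      (Wilker.quotient_eq_inv_recipQuotient k hx).symm
  · exact (Wilker.strictMonoOn_inv_recipQuotient hk.le).congr fun x hx =>
      (Wilker.quotient_eq_inv_recipQuotient k hx).symm
  · rw [Wilker.quotient_eq_inv_recipQuotient k hx, ← inv_div (5 * (k + 2))]
    obtain hk | hk := hk
    · have hpos : 0 < 5 * (k + 2) / 12 := by linarith
      have hlt := Wilker.lt_recipQuotient hk hx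
      exact ⟨min_lt_of_left_lt (inv_pos.2 (hpos.trans hlt)),
        lt_max_of_lt_right (inv_strictAnti₀ hpos hlt)⟩
    · have hneg : 5 * (k + 2) / 12 < 0 := by linarith
      have hlt := Wilker.recipQuotient_lt hk.le hx
      exact ⟨min_lt_of_right_lt ((inv_lt_inv_of_neg hneg (hlt.trans hneg)).2 hlt),
        lt_max_of_lt_left (inv_neg''.2 (hlt.trans hneg))⟩
end

section
/- Fix a real number k ≥ 1. The inequality (2/(k+2))·(sin(x)/x)^(k·p) + (k/(k+2))·(tan(x)/x)^p < 1 holds for every x ∈ (0, π/2) if and only if −12/(5(k+2)) ≤ p < 0. -/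
open Real Set

/-!
Write `s = sin x / x` and `t = tan x / x`.

For `k = 1` and `p = -4/5` the inequality says `((2 + cos x ^ (4/5)) / 3) ^ (5/4) < s`, that is
`x < sin x * ((2 + cos x ^ r) / 3) ^ (-1/r)` with `r = 4/5`. The derivative of the right-hand side
is a product of powers, so that it exceeds `1` becomes, in the variable `cos x ^ (2/5)`, an
inequality between logarithms whose difference has a rational derivative of constant sign.
The threshold exponent is proportional to `1 / (k + 2)`, and along `p = P / (k + 2)` the inequality
is inherited by larger `k`; for fixed `k` it is inherited by exponents closer to `0`, by concavity
of powers.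

Conversely, weighted AM-GM bounds the left-hand side below by `(s² t) ^ (k p / (k + 2))`. The
inequality already proved thus gives `1 < s² t`, and then it fails for every `p > 0`. For `p < 0`
put `u = -log s`. As `x → 0`, `log t = 2 u + (12/5) u² + o(u²)`, and to second order in `u` the
left-hand side exceeds `1` by `k p ((k + 2) p + 12/5) u² / (k + 2)`, which is positive below the
threshold.
-/

open Filter Topology

/-- The left-hand side of the weighted Wilker inequality, with `s` and `t` standing for
`sin x / x` and `tan x / x`. The weights add up to `1`. -/
noncomputable def wilkerSum (k p s t : ℝ) : ℝ :=
  2 / (k + 2) * s ^ (k * p) + k / (k + 2) * t ^ p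

section WilkerSum

variable {j k p p₀ s t : ℝ}

lemma two_div_add_div_add_two (hk : 0 ≤ k) : 2 / (k + 2) + k / (k + 2) = 1 := by
  field_simp
  ring

lemma rpow_le_wilkerSum (hk : 0 ≤ k) (hs : 0 < s) (ht : 0 < t) :
    (s ^ 2 * t) ^ (k * p / (k + 2)) ≤ wilkerSum k p s t := by
  have amgm := geom_mean_le_arith_mean2_weighted (by positivity) (by positivity)
    (rpow_nonneg hs.le (k * p)) (rpow_nonneg ht.le p) (two_div_add_div_add_two hk)
  rw [← rpow_mul hs.le, ← rpow_mul ht.le] at amgm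
  refine le_of_eq_of_le ?_ amgm
  rw [mul_rpow (by positivity) ht.le, ← rpow_natCast_mul hs.le]
  congr 2 <;> push_cast <;> ring

lemma wilkerSum_lt_one_of_exponent_le (hk : 0 ≤ k) (hs : 0 < s) (ht : 0 < t) (hp : p₀ ≤ p)
    (hp_neg : p < 0) (h : wilkerSum k p₀ s t < 1) : wilkerSum k p s t < 1 := by
  obtain ⟨l, hl_pos, hl_one, rfl⟩ : ∃ l, 0 < l ∧ l ≤ 1 ∧ p = p₀ * l := by
    have hp₀ : p₀ < 0 := hp.trans_lt hp_neg
    exact ⟨p / p₀, div_pos_of_neg_of_neg hp_neg hp₀, (div_le_one_of_neg hp₀).2 hp,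
      (mul_div_cancel₀ _ hp₀.ne).symm⟩
  have hA : 0 < s ^ (k * p₀) := by positivity
  have hB : 0 < t ^ p₀ := by positivity
  have concave := (concaveOn_rpow hl_pos.le hl_one).2 (mem_Ici.2 hA.le) (mem_Ici.2 hB.le)
    (by positivity) (by positivity) (two_div_add_div_add_two hk)
  simp only [smul_eq_mul] at concave
  calc wilkerSum k (p₀ * l) s t
      = 2 / (k + 2) * (s ^ (k * p₀)) ^ l + k / (k + 2) * (t ^ p₀) ^ l := by
        rw [wilkerSum, ← mul_assoc, rpow_mul hs.le, rpow_mul ht.le]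
    _ ≤ (wilkerSum k p₀ s t) ^ l := concave
    _ < 1 := rpow_lt_one (by unfold wilkerSum; positivity) h hl_pos

lemma rpow_div_one_sub_le_inv {w a b : ℝ} (hw0 : 0 ≤ w) (hw1 : w < 1) (ha : 0 < a) (hb : 0 < b)
    (hab : w * a + (1 - w) * b = 1) : a ^ (w / (1 - w)) ≤ b⁻¹ := by
  have hw : 0 < 1 - w := sub_pos.2 hw1
  have amgm : a ^ w * b ^ (1 - w) ≤ 1 :=
    (geom_mean_le_arith_mean2_weighted hw0 hw.le ha.le hb.le (by ring)).trans_eq hab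
  have root : (a ^ w * b ^ (1 - w)) ^ (1 - w)⁻¹ ≤ 1 :=
    rpow_le_one (by positivity) amgm (by positivity)
  rwa [mul_rpow (by positivity) (by positivity), rpow_rpow_inv hb.le hw.ne', ← rpow_mul ha.le,
    ← div_eq_mul_inv, ← le_div_iff₀ hb, one_div] at root

lemma rpow_mul_one_sub_le_rpow_sub_one {w q a b : ℝ} (hw0 : 0 ≤ w) (hw1 : w < 1) (hq : q ≤ 1)
    (ha : 0 < a) (hb : 0 < b) (hab : w * a + (1 - w) * b = 1) :
    a ^ (w / (1 - w) * (1 - q)) ≤ b ^ (q - 1) :=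
  calc a ^ (w / (1 - w) * (1 - q)) = (a ^ (w / (1 - w))) ^ (1 - q) := rpow_mul ha.le ..
    _ ≤ b⁻¹ ^ (1 - q) := rpow_le_rpow (by positivity)
        (rpow_div_one_sub_le_inv hw0 hw1 ha hb hab) (sub_nonneg.2 hq)
    _ = b ^ (q - 1) := by rw [inv_rpow hb.le, ← rpow_neg hb.le, neg_sub]

/-- The two exponents are chosen so that the weights `w * q` and `1 - w * q` still balance to first
order at `a = b = 1`. -/
lemma weighted_rpow_add_rpow_le_one {w q a b : ℝ} (hw0 : 0 ≤ w) (hw1 : w < 1) (hq0 : 0 ≤ q)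
    (hq1 : q ≤ 1) (ha : 1 ≤ a) (hb : 0 < b) (hab : w * a + (1 - w) * b = 1) :
    w * q * a ^ ((1 - w * q) / (1 - w)) + (1 - w * q) * b ^ q ≤ 1 := by
  have hw : 0 < 1 - w := sub_pos.2 hw1
  have hwq : 0 ≤ 1 - w * q := by nlinarith
  set line : ℝ → ℝ := fun x ↦ (1 - w * x) / (1 - w) with hline
  set F : ℝ → ℝ := fun x ↦ w * q * x ^ ((1 - w * q) / (1 - w)) + (1 - w * q) * line x ^ q
  set F' : ℝ → ℝ := fun x ↦
    w * q * ((1 - w * q) / (1 - w)) * (x ^ (w / (1 - w) * (1 - q)) - line x ^ (q - 1))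
  have hb_line : b = line a := by rw [hline, eq_div_iff hw.ne']; linarith
  have line_pos : ∀ x ∈ Icc 1 a, 0 < line x := fun x hx ↦
    hb.trans_le (by rw [hb_line]; simp only [hline]; gcongr; exact hx.2)
  have hF : ∀ x ∈ Icc 1 a, HasDerivAt F (F' x) x := by
    intro x hx
    have hx0 : x ≠ 0 := by linarith [hx.1]
    have dline : HasDerivAt line (-w / (1 - w)) x := by
      simpa using (((hasDerivAt_id x).const_mul w).const_sub 1).div_const (1 - w)
    refine (((hasDerivAt_rpow_const (Or.inl hx0)).const_mul (w * q)).add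
      ((dline.rpow_const (p := q) (Or.inl (line_pos x hx).ne')).const_mul (1 - w * q))).congr_deriv
      ?_
    have hexp : (1 - w * q) / (1 - w) - 1 = w / (1 - w) * (1 - q) := by field_simp; ring
    simp only [F', hexp]
    ring
  have hF' : ∀ x ∈ Icc 1 a, F' x ≤ 0 := by
    intro x hx
    have hx0 : 0 < x := by linarith [hx.1]
    have on_line : w * x + (1 - w) * line x = 1 := by simp only [hline]; field_simp; ring
    exact mul_nonpos_of_nonneg_of_nonpos (by positivity) (sub_nonpos.2
      (rpow_mul_one_sub_le_rpow_sub_one hw0 hw1 hq1 hx0 (line_pos x hx) on_line))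
  have anti : AntitoneOn F (Icc 1 a) :=
    antitoneOn_of_hasDerivWithinAt_nonpos (convex_Icc 1 a)
      (fun x hx ↦ (hF x hx).continuousAt.continuousWithinAt)
      (fun x hx ↦ (hF x (interior_subset hx)).hasDerivWithinAt)
      (fun x hx ↦ hF' x (interior_subset hx))
  have F_one : F 1 = 1 := by simp [F, hline, div_self hw.ne']
  simpa only [F_one, F, ← hb_line] using anti ⟨le_rfl, ha⟩ ⟨ha, le_rfl⟩ ha

lemma wilkerSum_div_add_two_lt_one_of_le (hj : 0 < j) (hjk : j ≤ k) (hp : p ≤ 0) (hs : 0 < s)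
    (hs1 : s ≤ 1) (ht : 0 < t) (h : wilkerSum j (p / (j + 2)) s t < 1) :
    wilkerSum k (p / (k + 2)) s t < 1 := by
  set w := 2 / (j + 2) with hw
  set q := (j + 2) / (k + 2) with hq
  have hk : 0 < k := hj.trans_le hjk
  have hw0 : 0 < w := by positivity
  have hwj : 1 - w = j / (j + 2) := by rw [hw]; field_simp; ring
  have hw_pos : 0 < 1 - w := by rw [hwj]; positivity
  have hq0 : 0 < q := by positivity
  have hq1 : q ≤ 1 := (div_le_one (by positivity)).2 (by linarith)
  have hwq : w * q = 2 / (k + 2) := by rw [hw, hq]; field_simp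
  have hwqk : 1 - w * q = k / (k + 2) := by rw [hwq]; field_simp; ring
  set a := s ^ (j * (p / (j + 2)))
  set b := t ^ (p / (j + 2))
  have ha1 : 1 ≤ a := one_le_rpow_of_pos_of_le_one_of_nonpos hs hs1
    (mul_nonpos_of_nonneg_of_nonpos hj.le (div_nonpos_of_nonpos_of_nonneg hp (by positivity)))
  have hb : 0 < b := by positivity
  have hb_lt : b < (1 - w * a) / (1 - w) := by
    rw [lt_div_iff₀ hw_pos, hwj]
    unfold wilkerSum at h
    linarith
  calc wilkerSum k (p / (k + 2)) s t
      = w * q * a ^ ((1 - w * q) / (1 - w)) + (1 - w * q) * b ^ q := by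
        rw [wilkerSum, ← rpow_mul hs.le, ← rpow_mul ht.le, hwqk, hwj, hwq, hq]
        congr 3 <;> field_simp
    _ < w * q * a ^ ((1 - w * q) / (1 - w)) + (1 - w * q) * ((1 - w * a) / (1 - w)) ^ q := by
        have : 0 < 1 - w * q := by rw [hwqk]; positivity
        gcongr
    _ ≤ 1 := weighted_rpow_add_rpow_le_one hw0.le (sub_pos.1 hw_pos) hq0.le hq1 ha1
        (hb.trans hb_lt) (by field_simp; ring)

lemma hasDerivAt_exp_quadratic (a b u : ℝ) :
    HasDerivAt (fun u ↦ exp (a * u + b * u ^ 2))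
      ((a + 2 * b * u) * exp (a * u + b * u ^ 2)) u := by
  have hquad : HasDerivAt (fun u ↦ a * u + b * u ^ 2) (a + 2 * b * u) u :=
    (((hasDerivAt_id u).const_mul a).add ((hasDerivAt_pow 2 u).const_mul b)).congr_deriv (by
      push_cast
      ring)
  exact hquad.exp.congr_deriv (mul_comm _ _)

lemma isLocalMin_add_exp_quadratic {v w a b a' b' : ℝ} (h1 : v * a + w * a' = 0)
    (h2 : 0 < v * (a ^ 2 + 2 * b) + w * (a' ^ 2 + 2 * b')) :
    IsLocalMin (fun u ↦ v * exp (a * u + b * u ^ 2) + w * exp (a' * u + b' * u ^ 2)) 0 := by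
  have first (u : ℝ) := ((hasDerivAt_exp_quadratic a b u).const_mul v).add
    ((hasDerivAt_exp_quadratic a' b' u).const_mul w)
  have linear (a b : ℝ) : HasDerivAt (fun u ↦ a + 2 * b * u) (2 * b) 0 := by
    simpa using ((hasDerivAt_id (0 : ℝ)).const_mul (2 * b)).const_add a
  have second := (((linear a b).mul (hasDerivAt_exp_quadratic a b 0)).const_mul v).add
    (((linear a' b').mul (hasDerivAt_exp_quadratic a' b' 0)).const_mul w)
  refine isLocalMin_of_deriv_deriv_pos ?_ ?_ (first 0).continuousAt
  · refine h2.trans_eq (Eq.trans ?_ (second.congr_of_eventuallyEq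
      (.of_forall fun u ↦ (first u).deriv)).deriv.symm)
    norm_num
    ring
  · exact (first 0).deriv.trans (by simpa using h1)

lemma isLocalMin_wilkerSum_exp {c : ℝ} (hk : 0 < k) (hp : p < 0) (hc : (k + 2) * p + c < 0) :
    IsLocalMin (fun u ↦ wilkerSum k p (exp (-u)) (exp (2 * u + c * u ^ 2))) 0 := by
  have sum_eq (u : ℝ) : wilkerSum k p (exp (-u)) (exp (2 * u + c * u ^ 2)) =
      2 / (k + 2) * exp (-(k * p) * u + 0 * u ^ 2) +
        k / (k + 2) * exp (2 * p * u + c * p * u ^ 2) := by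
    rw [wilkerSum, ← exp_mul, ← exp_mul]
    ring_nf
  simp only [sum_eq]
  refine isLocalMin_add_exp_quadratic (by ring) ?_
  have pos : 0 < 2 * k / (k + 2) * (p * ((k + 2) * p + c)) :=
    mul_pos (by positivity) (mul_pos_of_neg_of_neg hp hc)
  refine pos.trans_eq ?_
  field_simp
  ring

end WilkerSum

section CoreInequality

variable {x : ℝ}

lemma two_mul_log_add_nine_mul_log_lt {z : ℝ} (hz0 : 0 < z) (hz1 : z < 1) :
    2 * log z + 9 * log ((2 + z ^ 2) / 3) < 4 * log ((1 + 2 * z ^ 3) / 3) := by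
  set h : ℝ → ℝ := fun y ↦
    4 * log ((1 + 2 * y ^ 3) / 3) - (2 * log y + 9 * log ((2 + y ^ 2) / 3))
  set h' : ℝ → ℝ := fun y ↦
    -(4 * (1 - y) ^ 2 * (4 * y ^ 3 + 8 * y ^ 2 + 2 * y + 1)) /
      ((1 + 2 * y ^ 3) * y * (2 + y ^ 2))
  have hderiv : ∀ y ∈ Icc z 1, HasDerivAt h (h' y) y := by
    intro y hy
    have hy0 : 0 < y := hz0.trans_le hy.1
    refine ((((((hasDerivAt_pow 3 y).const_mul 2).const_add 1).div_const 3).log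
      (by positivity)).const_mul 4 |>.sub <| ((hasDerivAt_log hy0.ne').const_mul 2).add <|
      ((((hasDerivAt_pow 2 y).const_add 2).div_const 3).log (by positivity)).const_mul
      9).congr_deriv ?_
    simp only [h']
    field_simp
    push_cast
    ring
  have anti : StrictAntiOn h (Icc z 1) := by
    refine strictAntiOn_of_hasDerivWithinAt_neg (convex_Icc z 1)
      (fun y hy ↦ (hderiv y hy).continuousAt.continuousWithinAt)
      (fun y hy ↦ (hderiv y (interior_subset hy)).hasDerivWithinAt) fun y hy ↦ ?_
    rw [interior_Icc] at hy
    have hy0 : 0 < y := hz0.trans hy.1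
    have hy1 : 0 < 1 - y := sub_pos.2 hy.2
    exact div_neg_of_neg_of_pos (neg_lt_zero.2 (by positivity)) (by positivity)
  have h_one : h 1 = 0 := by norm_num [h]
  have := anti ⟨le_rfl, hz1.le⟩ ⟨hz1.le, le_rfl⟩ hz1
  simp only [h_one, h] at this
  linarith

lemma hasDerivAt_sin_mul_rpow_cos {r : ℝ} (hr : r ≠ 0) (hx : 0 < cos x) :
    HasDerivAt (fun y ↦ sin y * ((2 + cos y ^ r) / 3) ^ (-r⁻¹))
      (cos x ^ (r - 1) * ((1 + 2 * cos x ^ (2 - r)) / 3) *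
        ((2 + cos x ^ r) / 3) ^ (-r⁻¹ - 1)) x := by
  set M := (2 + cos x ^ r) / 3 with hM
  have hM0 : 0 < M := by positivity
  have dM : HasDerivAt (fun y ↦ (2 + cos y ^ r) / 3) (-sin x * r * cos x ^ (r - 1) / 3) x :=
    (((hasDerivAt_cos x).rpow_const (Or.inl hx.ne')).const_add 2).div_const 3
  refine ((hasDerivAt_sin x).mul (dM.rpow_const (p := -r⁻¹) (Or.inl hM0.ne'))).congr_deriv ?_
  have hMpow : M ^ (-r⁻¹) = M * M ^ (-r⁻¹ - 1) := by
    rw [rpow_sub_one hM0.ne', mul_div_cancel₀ _ hM0.ne']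
  have hcos : cos x ^ (r - 1) * cos x ^ (2 - r) = cos x := by
    rw [← rpow_add hx]; norm_num
  have hcos' : cos x * cos x ^ r = cos x ^ 2 * cos x ^ (r - 1) := by
    rw [rpow_sub_one hx.ne']; field_simp
  have hrr : r * r⁻¹ = 1 := mul_inv_cancel₀ hr
  simp only [← hM, hMpow]
  rw [hM]
  linear_combination M ^ (-r⁻¹ - 1) / 3 * (hcos' - 2 * hcos
    + sin x ^ 2 * cos x ^ (r - 1) * hrr + cos x ^ (r - 1) * sin_sq_add_cos_sq x)

lemma one_lt_rpow_mul_rpow_of_lt_one {c : ℝ} (hc0 : 0 < c) (hc1 : c < 1) :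
    1 < c ^ ((4 / 5 : ℝ) - 1) * ((1 + 2 * c ^ (2 - (4 / 5 : ℝ))) / 3) *
      ((2 + c ^ (4 / 5 : ℝ)) / 3) ^ (-(4 / 5 : ℝ)⁻¹ - 1) := by
  set z := c ^ (2 / 5 : ℝ) with hz
  have hz0 : 0 < z := by positivity
  have hz2 : c ^ (4 / 5 : ℝ) = z ^ 2 := by rw [hz, ← rpow_mul_natCast hc0.le]; norm_num
  have hz3 : c ^ (2 - (4 / 5 : ℝ)) = z ^ 3 := by rw [hz, ← rpow_mul_natCast hc0.le]; norm_num
  have hlogz : log z = 2 / 5 * log c := log_rpow hc0 _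
  rw [hz2, hz3, ← log_pos_iff (by positivity), log_mul (by positivity) (by positivity),
    log_mul (by positivity) (by positivity), log_rpow hc0, log_rpow (by positivity)]
  linarith [two_mul_log_add_nine_mul_log_lt hz0 (rpow_lt_one hc0.le hc1 (by norm_num))]

lemma cos_pos_of_mem_Ioo_zero_pi_div_two (hx : x ∈ Ioo 0 (π / 2)) : 0 < cos x :=
  cos_pos_of_mem_Ioo ⟨by linarith [hx.1, pi_pos], hx.2⟩

lemma sin_div_self_pos (hx : x ∈ Ioo 0 (π / 2)) : 0 < sin x / x :=
  div_pos (sin_pos_of_pos_of_lt_pi hx.1 (by linarith [hx.2, pi_pos])) hx.1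

lemma tan_div_self_pos (hx : x ∈ Ioo 0 (π / 2)) : 0 < tan x / x :=
  div_pos (tan_pos_of_pos_of_lt_pi_div_two hx.1 hx.2) hx.1

lemma tan_div_self_eq : tan x / x = sin x / x / cos x := by
  rw [tan_eq_sin_div_cos, div_right_comm]

lemma lt_sin_mul_rpow_cos (hx : x ∈ Ioo 0 (π / 2)) :
    x < sin x * ((2 + cos x ^ (4 / 5 : ℝ)) / 3) ^ (-(4 / 5 : ℝ)⁻¹) := by
  set f : ℝ → ℝ := fun y ↦ sin y * ((2 + cos y ^ (4 / 5 : ℝ)) / 3) ^ (-(4 / 5 : ℝ)⁻¹) - y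
  have hcos : ∀ y ∈ Icc 0 x, 0 < cos y := fun y hy ↦
    cos_pos_of_mem_Ioo ⟨by linarith [hy.1, pi_pos], hy.2.trans_lt hx.2⟩
  have hf (y : ℝ) (hy : y ∈ Icc 0 x) :=
    (hasDerivAt_sin_mul_rpow_cos (by norm_num : (4 / 5 : ℝ) ≠ 0) (hcos y hy)).sub (hasDerivAt_id y)
  have mono : StrictMonoOn f (Icc 0 x) := by
    refine strictMonoOn_of_hasDerivWithinAt_pos (convex_Icc 0 x)
      (fun y hy ↦ (hf y hy).continuousAt.continuousWithinAt)
      (fun y hy ↦ (hf y (interior_subset hy)).hasDerivWithinAt) fun y hy ↦ sub_pos.2 ?_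
    rw [interior_Icc] at hy
    have cos_lt_one : cos y < 1 := by
      simpa using cos_lt_cos_of_nonneg_of_le_pi_div_two le_rfl (hy.2.trans hx.2).le hy.1
    exact one_lt_rpow_mul_rpow_of_lt_one (hcos y (Ioo_subset_Icc_self hy)) cos_lt_one
  simpa [f] using mono ⟨le_rfl, hx.1.le⟩ ⟨hx.1.le, le_rfl⟩ hx.1

lemma wilkerSum_one_neg_four_fifths_lt_one (hx : x ∈ Ioo 0 (π / 2)) :
    wilkerSum 1 (-(4 / 5)) (sin x / x) (tan x / x) < 1 := by
  have hcos := cos_pos_of_mem_Ioo_zero_pi_div_two hx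
  have hs := sin_div_self_pos hx
  set s := sin x / x with hs_def
  set M := (2 + cos x ^ (4 / 5 : ℝ)) / 3 with hM
  have hM0 : 0 < M := by positivity
  have hMs : M < s ^ (4 / 5 : ℝ) := by
    have core := lt_sin_mul_rpow_cos hx
    rw [rpow_neg hM0.le, ← div_eq_mul_inv, lt_div_comm₀ hx.1 (by positivity), ← hs_def] at core
    exact (rpow_inv_lt_iff_of_pos hM0.le hs.le (by norm_num)).1 core
  have ht : (tan x / x) ^ (-(4 / 5) : ℝ) = s ^ (-(4 / 5) : ℝ) * cos x ^ (4 / 5 : ℝ) := by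
    rw [tan_div_self_eq, div_rpow hs.le hcos.le, rpow_neg hcos.le, div_inv_eq_mul]
  calc wilkerSum 1 (-(4 / 5)) s (tan x / x)
      = s ^ (-(4 / 5) : ℝ) * M := by rw [wilkerSum, ht, hM, one_mul]; ring
    _ = M / s ^ (4 / 5 : ℝ) := by rw [rpow_neg hs.le, inv_mul_eq_div]
    _ < 1 := (div_lt_one (by positivity)).2 hMs

lemma one_lt_sq_sin_div_self_mul_tan_div_self (hx : x ∈ Ioo 0 (π / 2)) :
    1 < (sin x / x) ^ 2 * (tan x / x) := by
  have hs := sin_div_self_pos hx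
  have ht := tan_div_self_pos hx
  by_contra! hle
  refine (wilkerSum_one_neg_four_fifths_lt_one hx).not_ge
    (le_trans ?_ (rpow_le_wilkerSum zero_le_one hs ht))
  exact one_le_rpow_of_pos_of_le_one_of_nonpos (by positivity) hle (by norm_num)

end CoreInequality

lemma tendsto_div_pow_succ_of_hasDerivAt {f f' : ℝ → ℝ} {n : ℕ} {L : ℝ}
    (hf : ∀ x, HasDerivAt f (f' x) x) (hf0 : f 0 = 0)
    (hL : Tendsto (fun x ↦ f' x / x ^ n) (𝓝[≠] 0) (𝓝 L)) :
    Tendsto (fun x ↦ f x / x ^ (n + 1)) (𝓝[≠] 0) (𝓝 (L / (n + 1))) := by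
  refine HasDerivAt.lhopital_zero_nhdsNE (.of_forall hf)
    (.of_forall fun x ↦ hasDerivAt_pow (n + 1) x) ?_ ?_ ?_ ?_
  · filter_upwards [self_mem_nhdsWithin] with x hx
    have : x ≠ 0 := hx
    positivity
  · simpa [hf0] using (hf 0).continuousAt.tendsto.mono_left nhdsWithin_le_nhds
  · simpa using (continuous_pow (M := ℝ) (n + 1)).continuousAt.tendsto.mono_left
      (nhdsWithin_le_nhds (a := 0) (s := {0}ᶜ))
  · refine (hL.div_const (n + 1 : ℝ)).congr fun x ↦ ?_
    push_cast
    rw [div_div, mul_comm (x ^ n)]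

lemma tendsto_sin_div_self : Tendsto (fun x ↦ sin x / x) (𝓝[≠] 0) (𝓝 1) := by
  have := continuous_sinc.continuousAt.tendsto.mono_left (nhdsWithin_le_nhds (a := 0) (s := {0}ᶜ))
  rw [sinc_zero] at this
  refine this.congr' ?_
  filter_upwards [self_mem_nhdsWithin] with x hx using sinc_of_ne_zero hx

lemma tendsto_one_sub_cos_div_sq :
    Tendsto (fun x ↦ (1 - cos x) / x ^ 2) (𝓝[≠] 0) (𝓝 (1 / 2)) := by
  convert tendsto_div_pow_succ_of_hasDerivAt (f := fun x ↦ 1 - cos x) (n := 1)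
    (fun x ↦ (hasDerivAt_cos x).const_sub 1) (by simp)
    (by simpa using tendsto_sin_div_self) using 2
  norm_num

lemma tendsto_self_sub_sin_div_cube :
    Tendsto (fun x ↦ (x - sin x) / x ^ 3) (𝓝[≠] 0) (𝓝 (1 / 6)) := by
  convert tendsto_div_pow_succ_of_hasDerivAt (f := fun x ↦ x - sin x)
    (fun x ↦ (hasDerivAt_id x).sub (hasDerivAt_sin x)) (by simp)
    tendsto_one_sub_cos_div_sq using 2
  norm_num

lemma tendsto_cos_sub_div_pow_four :
    Tendsto (fun x ↦ (cos x - (1 - x ^ 2 / 2)) / x ^ 4) (𝓝[≠] 0) (𝓝 (1 / 24)) := by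
  have hderiv (x : ℝ) : HasDerivAt (fun x ↦ cos x - (1 - x ^ 2 / 2)) (x - sin x) x := by
    refine ((hasDerivAt_cos x).sub (((hasDerivAt_pow 2 x).div_const 2).const_sub 1)).congr_deriv ?_
    norm_num
    ring
  convert tendsto_div_pow_succ_of_hasDerivAt hderiv (by simp) tendsto_self_sub_sin_div_cube using 2
  norm_num

lemma tendsto_sin_sub_div_pow_five :
    Tendsto (fun x ↦ (sin x - (x - x ^ 3 / 6)) / x ^ 5) (𝓝[≠] 0) (𝓝 (1 / 120)) := by
  have hderiv (x : ℝ) :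
      HasDerivAt (fun x ↦ sin x - (x - x ^ 3 / 6)) (cos x - (1 - x ^ 2 / 2)) x := by
    refine ((hasDerivAt_sin x).sub
      ((hasDerivAt_id x).sub ((hasDerivAt_pow 3 x).div_const 6))).congr_deriv ?_
    norm_num
    ring
  convert tendsto_div_pow_succ_of_hasDerivAt hderiv (by simp) tendsto_cos_sub_div_pow_four using 2
  norm_num

lemma tendsto_one_sub_sin_div_self_div_sq :
    Tendsto (fun x ↦ (1 - sin x / x) / x ^ 2) (𝓝[≠] 0) (𝓝 (1 / 6)) := by
  refine tendsto_self_sub_sin_div_cube.congr' ?_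
  filter_upwards [self_mem_nhdsWithin] with x (hx : x ≠ 0)
  field_simp

lemma tendsto_sin_div_self_cube_sub_cos_div_pow_four :
    Tendsto (fun x ↦ ((sin x / x) ^ 3 - cos x) / x ^ 4) (𝓝[≠] 0) (𝓝 (1 / 15)) := by
  have hx0 : Tendsto (fun x : ℝ ↦ x) (𝓝[≠] 0) (𝓝 0) := nhdsWithin_le_nhds
  have hlim := (((tendsto_sin_sub_div_pow_five.const_mul 3).add
    ((tendsto_self_sub_sin_div_cube.pow 2).const_mul 3)).sub
    ((hx0.pow 2).mul (tendsto_self_sub_sin_div_cube.pow 3))).sub tendsto_cos_sub_div_pow_four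
  norm_num at hlim
  refine hlim.congr' ?_
  filter_upwards [self_mem_nhdsWithin] with x (hx : x ≠ 0)
  field_simp
  ring

lemma eventually_sin_div_self_cube_sub_cos_le {c : ℝ} (hc : 12 / 5 < c) :
    ∀ᶠ x in 𝓝[>] 0, (sin x / x) ^ 3 - cos x ≤ c * cos x * (1 - sin x / x) ^ 2 := by
  have hcos : Tendsto cos (𝓝[≠] 0) (𝓝 1) := by
    simpa using (continuous_cos.tendsto 0).mono_left (nhdsWithin_le_nhds (s := {0}ᶜ))
  have hright := (hcos.const_mul c).mul (tendsto_one_sub_sin_div_self_div_sq.pow 2)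
  have hlt := (tendsto_sin_div_self_cube_sub_cos_div_pow_four.eventually_lt hright
    (by linarith)).filter_mono (nhdsGT_le_nhdsNE 0)
  filter_upwards [hlt, self_mem_nhdsWithin] with x hlt (hx : 0 < x)
  rw [div_pow (1 - sin x / x), ← pow_mul, ← mul_div_assoc] at hlt
  exact ((div_lt_div_iff_of_pos_right (by positivity)).1 hlt).le

lemma eventually_tan_div_self_le_exp {c : ℝ} (hc : 12 / 5 < c) :
    ∀ᶠ x in 𝓝[>] 0, tan x / x ≤
      exp (2 * -log (sin x / x) + c * (-log (sin x / x)) ^ 2) := by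
  filter_upwards [eventually_sin_div_self_cube_sub_cos_le hc, Ioo_mem_nhdsGT pi_div_two_pos]
    with x hle hx
  have hcos := cos_pos_of_mem_Ioo_zero_pi_div_two hx
  have hs := sin_div_self_pos hx
  have hs1 : sin x / x ≤ 1 := (div_le_one hx.1).2 (sin_le hx.1.le)
  rw [← log_le_iff_le_exp (tan_div_self_pos hx), tan_div_self_eq]
  set s := sin x / x
  have hlog : 1 - s ≤ -log s := by linarith [log_le_sub_one_of_pos hs]
  have bound : log (s ^ 3 / cos x) ≤ c * (-log s) ^ 2 := calc
    log (s ^ 3 / cos x) ≤ s ^ 3 / cos x - 1 := log_le_sub_one_of_pos (by positivity)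
    _ = (s ^ 3 - cos x) / cos x := by field_simp
    _ ≤ c * (1 - s) ^ 2 := by rw [div_le_iff₀ hcos]; linarith
    _ ≤ c * (-log s) ^ 2 := by gcongr
  rw [log_div (by positivity) hcos.ne', log_pow] at bound
  rw [log_div hs.ne' hcos.ne']
  push_cast at bound
  linarith

section Wilker

variable {k p x : ℝ}

lemma wilkerSum_sin_tan_lt_one (hk : 1 ≤ k) (hp : -(12 / (5 * (k + 2))) ≤ p) (hp_neg : p < 0)
    (hx : x ∈ Ioo 0 (π / 2)) : wilkerSum k p (sin x / x) (tan x / x) < 1 := by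
  have hs := sin_div_self_pos hx
  have hs1 : sin x / x ≤ 1 := (div_le_one hx.1).2 (sin_le hx.1.le)
  have ht := tan_div_self_pos hx
  have base : wilkerSum 1 (-(12 / 5) / (1 + 2)) (sin x / x) (tan x / x) < 1 := by
    convert wilkerSum_one_neg_four_fifths_lt_one hx using 2
    norm_num
  refine wilkerSum_lt_one_of_exponent_le (by linarith) hs ht (le_of_eq_of_le ?_ hp) hp_neg
    (wilkerSum_div_add_two_lt_one_of_le one_pos hk (by norm_num) hs hs1 ht base)
  field_simp

lemma one_lt_wilkerSum_sin_tan (hk : 0 < k) (hp : 0 < p) (hx : x ∈ Ioo 0 (π / 2)) :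
    1 < wilkerSum k p (sin x / x) (tan x / x) :=
  (one_lt_rpow (one_lt_sq_sin_div_self_mul_tan_div_self hx) (by positivity)).trans_le
    (rpow_le_wilkerSum hk.le (sin_div_self_pos hx) (tan_div_self_pos hx))

lemma eventually_one_le_wilkerSum_sin_tan (hk : 0 < k) (hp : p < -(12 / (5 * (k + 2)))) :
    ∀ᶠ x in 𝓝[>] 0, 1 ≤ wilkerSum k p (sin x / x) (tan x / x) := by
  have hp_neg : p < 0 := hp.trans (neg_lt_zero.2 (by positivity))
  obtain ⟨c, hc, hcp⟩ : ∃ c, 12 / 5 < c ∧ c < -((k + 2) * p) := by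
    refine exists_between ?_
    rw [lt_neg, div_lt_iff₀ (by positivity)] at hp
    linarith
  have hu : Tendsto (fun x ↦ -log (sin x / x)) (𝓝[>] 0) (𝓝 0) := by
    simpa using (tendsto_sin_div_self.log one_ne_zero).neg.mono_left (nhdsGT_le_nhdsNE 0)
  have hmin := hu.eventually (isLocalMin_wilkerSum_exp hk hp_neg (c := c) (by linarith))
  filter_upwards [hmin, eventually_tan_div_self_le_exp hc, Ioo_mem_nhdsGT pi_div_two_pos]
    with x hmin htan hx
  have hs := sin_div_self_pos hx
  have ht := tan_div_self_pos hx
  calc (1 : ℝ) = wilkerSum k p (exp (-0)) (exp (2 * 0 + c * 0 ^ 2)) := by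
        simp [wilkerSum, two_div_add_div_add_two hk.le]
    _ ≤ _ := hmin
    _ ≤ wilkerSum k p (sin x / x) (tan x / x) := by
        rw [neg_neg, exp_log hs, wilkerSum, wilkerSum]
        gcongr 2 / (k + 2) * _ + k / (k + 2) * ?_
        exact rpow_le_rpow_of_nonpos ht htan hp_neg.le

end Wilker

theorem wilker_trig_lt (k : ℝ) (hk : 1 ≤ k) (p : ℝ) (hp : p ≠ 0) :
    (∀ x ∈ Ioo (0 : ℝ) (π / 2),
        2 / (k + 2) * (sin x / x) ^ (k * p) + k / (k + 2) * (tan x / x) ^ p < 1) ↔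
      (-(12 / (5 * (k + 2))) ≤ p ∧ p < 0) := by
  have hk0 : 0 < k := one_pos.trans_le hk
  constructor
  · intro h
    constructor
    · by_contra! hlt
      obtain ⟨x, hge, hx⟩ :=
        ((eventually_one_le_wilkerSum_sin_tan hk0 hlt).and (Ioo_mem_nhdsGT pi_div_two_pos)).exists
      exact (h x hx).not_ge hge
    · by_contra! hge
      have hx : π / 4 ∈ Ioo 0 (π / 2) := ⟨by positivity, by linarith [pi_pos]⟩
      exact lt_asymm (h _ hx) (one_lt_wilkerSum_sin_tan hk0 (hge.lt_of_ne' hp) hx)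
  · rintro ⟨hle, hneg⟩ x hx
    exact wilkerSum_sin_tan_lt_one hk hle hneg hx
end

section
/- Fix a real number k ≥ 1. The inequality (2/(k+2))·(sinh(x)/x)^(k·p) + (k/(k+2))·(tanh(x)/x)^p > 1 holds for every x ∈ (0, ∞) if and only if p > 0 or p ≤ −12/(5(k+2)). -/
open Real Set

/-!
Write `S = sinh x / x` and `T = tanh x / x`. As `x → 0`, the left-hand side minus `1` is
`k * p / (k + 2) * (1 / 15 + p * (k + 2) / 36) * x ^ 4 + o(x ^ 4)`, which forces the condition on a
negative `p`.

For `p > 0` the inequality follows from the weighted AM-GM inequality and Lazarević's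
inequality in the form `1 < S ^ 2 * T`. For `p < 0`, power means reduce it to the threshold
exponent `p = -12 / (5 * (k + 2))`. There, with `w = 2 / (k + 2)`, `A = 6 / 5 * log S` and
`B = -3 / 5 * log T`, the inequality is equivalent to
`w * coth (w * B) < (1 - w) * coth ((1 - w) * A) + 1`. Since `y ↦ y * coth y` is increasing on
`(0, ∞)`, lowering `w` preserves it, which leaves the largest weight `w = 2 / 3`, that is `k = 1`.
-/

open Filter Topology

section Limits

lemma tendsto_pow_nhdsNE_zero {n : ℕ} (hn : n ≠ 0) :
    Tendsto (fun x : ℝ ↦ x ^ n) (𝓝[≠] 0) (𝓝 0) :=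
  ((continuous_pow n).tendsto' 0 0 (zero_pow hn)).mono_left nhdsWithin_le_nhds

lemma tendsto_exp_sub_sum_range_div_pow (n : ℕ) :
    Tendsto (fun x : ℝ ↦ (exp x - ∑ i ∈ Finset.range n, x ^ i / i.factorial) / x ^ n) (𝓝[≠] 0)
      (𝓝 (1 / n.factorial)) := by
  have h := ((exp_sub_sum_range_succ_isLittleO_pow n).mono
    (nhdsWithin_le_nhds (s := {0}ᶜ))).tendsto_div_nhds_zero.add_const (1 / (n.factorial : ℝ))
  rw [zero_add] at h
  refine h.congr' ?_
  filter_upwards [self_mem_nhdsWithin] with x (hx : x ≠ 0)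
  rw [Finset.sum_range_succ]
  field_simp
  ring

lemma tendsto_neg_nhdsNE_zero : Tendsto (fun x : ℝ ↦ -x) (𝓝[≠] 0) (𝓝[≠] 0) :=
  tendsto_nhdsWithin_iff.2 ⟨(continuous_neg.tendsto' 0 0 neg_zero).mono_left nhdsWithin_le_nhds, by
    filter_upwards [self_mem_nhdsWithin] with x hx using neg_ne_zero.2 hx⟩

variable {α : Type*} {l : Filter α} {f g : α → ℝ} {c : ℝ}

lemma tendsto_of_tendsto_sub_div {a : ℝ} (hg : Tendsto g l (𝓝 0)) (hg0 : ∀ᶠ x in l, g x ≠ 0)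
    (h : Tendsto (fun x ↦ (f x - a) / g x) l (𝓝 c)) : Tendsto f l (𝓝 a) := by
  have h' := (h.mul hg).add_const a
  rw [mul_zero, zero_add] at h'
  refine h'.congr' ?_
  filter_upwards [hg0] with x hx
  rw [div_mul_cancel₀ _ hx, sub_add_cancel]

lemma tendsto_log_div (hf : Tendsto f l (𝓝 1))
    (h : Tendsto (fun x ↦ (f x - 1) / g x) l (𝓝 c)) :
    Tendsto (fun x ↦ log (f x) / g x) l (𝓝 c) := by
  have hslope : ContinuousAt (dslope log 1) 1 :=
    continuousAt_dslope_same.2 (differentiableAt_log one_ne_zero)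
  have hslope_one : dslope log 1 1 = 1 := by
    rw [dslope_same, deriv_log, inv_one]
  have h' := h.mul (hslope.tendsto.comp hf)
  rw [hslope_one, mul_one] at h'
  refine h'.congr fun x ↦ ?_
  have := sub_smul_dslope log 1 (f x)
  rw [log_one, sub_zero, smul_eq_mul] at this
  rw [← this, Function.comp_apply, div_mul_eq_mul_div]

lemma tendsto_exp_sub_one_sub_div_sq (hf : Tendsto f l (𝓝 0))
    (h : Tendsto (fun x ↦ f x / g x) l (𝓝 c)) :
    Tendsto (fun x ↦ (exp (f x) - 1 - f x) / g x ^ 2) l (𝓝 (c ^ 2 / 2)) := by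
  have hrem := ((exp_sub_sum_range_succ_isLittleO_pow 2).comp_tendsto hf).tendsto_div_nhds_zero
  have h' := ((hrem.add_const (1 / 2)).mul (h.pow 2))
  rw [zero_add, one_div_mul_eq_div] at h'
  refine h'.congr fun x ↦ ?_
  simp only [Function.comp_apply, Finset.sum_range_succ, Finset.sum_range_zero, Nat.factorial]
  rcases eq_or_ne (f x) 0 with hx | hx
  · simp [hx]
  · push_cast
    field_simp
    ring

end Limits

section Hyperbolic

variable {x : ℝ}

lemma sinh_div_self_pos (hx : x ≠ 0) : 0 < sinh x / x := by
  rcases hx.lt_or_gt with hx | hx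
  · exact div_pos_of_neg_of_neg (sinh_neg_iff.2 hx) hx
  · exact div_pos (sinh_pos_iff.2 hx) hx

lemma tanh_div_self_eq (x : ℝ) : tanh x / x = sinh x / x / cosh x := by
  rw [tanh_eq_sinh_div_cosh, div_right_comm]

lemma tanh_div_self_pos (hx : x ≠ 0) : 0 < tanh x / x := by
  rw [tanh_div_self_eq]
  exact div_pos (sinh_div_self_pos hx) (cosh_pos x)

lemma sinh_mul_comp_cosh_lt {φ φ' : ℝ → ℝ} {m : ℝ} (hφ : ∀ c, 1 ≤ c → HasDerivAt φ (φ' c) c)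
    (hlt : ∀ c, 1 < c → c * φ c + (c ^ 2 - 1) * φ' c < m) (hx : 0 < x) :
    sinh x * φ (cosh x) < m * x := by
  have hderiv (y : ℝ) : HasDerivAt (fun y ↦ m * y - sinh y * φ (cosh y))
      (m - (cosh y * φ (cosh y) + (cosh y ^ 2 - 1) * φ' (cosh y))) y := by
    refine (((hasDerivAt_id y).const_mul m).sub ((hasDerivAt_sinh y).mul
      ((hφ _ (one_le_cosh y)).comp y (hasDerivAt_cosh y)))).congr_deriv ?_
    rw [cosh_sq, Function.comp_apply]
    ring
  have hmono : StrictMonoOn (fun y ↦ m * y - sinh y * φ (cosh y)) (Ici 0) := by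
    refine strictMonoOn_of_hasDerivWithinAt_pos (convex_Ici 0)
      (fun y _ ↦ (hderiv y).continuousAt.continuousWithinAt)
      (fun y _ ↦ (hderiv y).hasDerivWithinAt) fun y hy ↦ sub_pos.2 (hlt _ (one_lt_cosh.2 ?_))
    rw [interior_Ici] at hy
    exact hy.ne'
  have := hmono self_mem_Ici hx.le hx
  simp only [mul_zero, sinh_zero, zero_mul, sub_zero] at this
  exact sub_pos.1 this

lemma tanh_lt_self (hx : 0 < x) : tanh x < x := by
  have h := sinh_mul_comp_cosh_lt (φ := fun c ↦ c⁻¹) (m := 1)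
    (fun c hc ↦ hasDerivAt_inv (by positivity)) (fun c hc ↦ ?_) hx
  · rwa [one_mul, ← div_eq_mul_inv, ← tanh_eq_sinh_div_cosh] at h
  · have : 0 < c := by linarith
    have : c * c⁻¹ + (c ^ 2 - 1) * -(c ^ 2)⁻¹ = (c ^ 2)⁻¹ := by field_simp; ring
    rw [this]
    exact inv_lt_one_of_one_lt₀ (one_lt_pow₀ hc two_ne_zero)

lemma cosh_lt_sinh_div_self_pow_three (hx : 0 < x) : cosh x < (sinh x / x) ^ 3 := by
  have hroot : sinh x * -cosh x ^ (-1 / 3 : ℝ) < -1 * x := by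
    refine sinh_mul_comp_cosh_lt (φ := fun c ↦ -c ^ (-1 / 3 : ℝ))
      (fun c hc ↦ (hasDerivAt_rpow_const (Or.inl (by positivity))).neg) (fun c hc ↦ ?_) hx
    have hc0 : 0 < c := by linarith
    obtain ⟨t, ht, rfl⟩ : ∃ t, 1 < t ∧ t ^ 3 = c :=
      ⟨c ^ (1 / 3 : ℝ), one_lt_rpow hc (by norm_num), by
        rw [← rpow_mul_natCast hc0.le]; norm_num⟩
    have ht0 : 0 < t := by linarith
    have hpow : (t ^ 3) ^ (-1 / 3 : ℝ) = t⁻¹ := by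
      rw [← rpow_natCast_mul ht0.le, ← rpow_neg_one]; norm_num
    rw [rpow_sub_one hc0.ne', hpow, ← sub_pos]
    have : -1 - (t ^ 3 * -t⁻¹ + ((t ^ 3) ^ 2 - 1) * -(-1 / 3 * (t⁻¹ / t ^ 3)))
        = (t ^ 2 - 1) ^ 2 * (2 * t ^ 2 + 1) / (3 * t ^ 4) := by
      field_simp; ring
    rw [this]
    have : 0 < t ^ 2 - 1 := sub_pos.2 (one_lt_pow₀ ht two_ne_zero)
    positivity
  have hlt : x < sinh x * cosh x ^ (-1 / 3 : ℝ) := by linarith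
  have hcube : x ^ 3 < sinh x ^ 3 / cosh x := by
    have := pow_lt_pow_left₀ hlt hx.le three_ne_zero
    rw [mul_pow, ← rpow_mul_natCast (cosh_pos x).le] at this
    norm_num [rpow_neg_one] at this
    rwa [div_eq_mul_inv]
  rw [div_pow, lt_div_iff₀ (by positivity), mul_comm]
  exact (lt_div_iff₀ (cosh_pos x)).1 hcube

lemma one_lt_sinh_div_self_sq_mul_tanh_div_self (hx : 0 < x) :
    1 < (sinh x / x) ^ 2 * (tanh x / x) := by
  have : (sinh x / x) ^ 2 * (tanh x / x) = (sinh x / x) ^ 3 / cosh x := by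
    rw [tanh_div_self_eq]; ring
  rw [this, one_lt_div (cosh_pos x)]
  exact cosh_lt_sinh_div_self_pow_three hx

lemma monotoneOn_id_div_tanh : MonotoneOn (fun y : ℝ ↦ y / tanh y) (Ioi 0) := by
  have hderiv (y : ℝ) (hy : 0 < y) :
      HasDerivAt (fun y ↦ y / tanh y) ((sinh y * cosh y - y) / sinh y ^ 2) y := by
    have hs := sinh_pos_iff.2 hy
    have heq : (fun y : ℝ ↦ y / tanh y) = fun y ↦ y * cosh y / sinh y := by
      funext y
      rw [tanh_eq_sinh_div_cosh, div_div_eq_mul_div]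
    rw [heq]
    refine (((hasDerivAt_id y).mul (hasDerivAt_cosh y)).div (hasDerivAt_sinh y)
      hs.ne').congr_deriv ?_
    congr 1
    simp only [id, Pi.mul_apply]
    linear_combination (-y) * cosh_sq y
  refine monotoneOn_of_hasDerivWithinAt_nonneg (convex_Ioi 0)
    (f' := fun y ↦ (sinh y * cosh y - y) / sinh y ^ 2)
    (fun y hy ↦ (hderiv y hy).continuousAt.continuousWithinAt)
    (fun y hy ↦ (hderiv y (by simpa using hy)).hasDerivWithinAt) fun y hy ↦ ?_
  have hy0 : 0 < y := by simpa using hy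
  have hle : y ≤ sinh y * cosh y :=
    (self_le_sinh_iff.2 hy0.le).trans
      (le_mul_of_one_le_right (sinh_pos_iff.2 hy0).le (one_le_cosh y))
  exact div_nonneg (sub_nonneg.2 hle) (sq_nonneg _)

lemma div_tanh_mul_le_div_tanh_mul {u v c : ℝ} (hu : 0 < u) (huv : u ≤ v) (hc : 0 < c) :
    u / tanh (u * c) ≤ v / tanh (v * c) := by
  have h := monotoneOn_id_div_tanh (mul_pos hu hc) (mul_pos (hu.trans_le huv) hc)
    (mul_le_mul_of_nonneg_right huv hc.le)
  simp only [mul_div_right_comm] at h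
  exact le_of_mul_le_mul_right h hc

end Hyperbolic

section Weights

variable {A B w : ℝ}

lemma tanh_eq_exp_sub_one_div (y : ℝ) : tanh y = (exp (2 * y) - 1) / (exp (2 * y) + 1) := by
  have hexp : exp (2 * y) = exp y * exp y := by rw [two_mul, exp_add]
  rw [tanh_eq, exp_neg, hexp]
  have := exp_pos y
  field_simp

lemma one_lt_weighted_exp_iff (hw : 0 < w) (hw1 : w < 1) (hA : 0 < A) (hB : 0 < B) :
    1 < w * exp (-(2 * ((1 - w) * A))) + (1 - w) * exp (2 * (w * B)) ↔
      w / tanh (w * B) < (1 - w) / tanh ((1 - w) * A) + 1 := by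
  have : 0 < 1 - w := sub_pos.2 hw1
  have hE : 1 < exp (2 * ((1 - w) * A)) := one_lt_exp_iff.2 (by positivity)
  have hG : 1 < exp (2 * (w * B)) := one_lt_exp_iff.2 (by positivity)
  rw [tanh_eq_exp_sub_one_div, tanh_eq_exp_sub_one_div, exp_neg]
  generalize exp (2 * ((1 - w) * A)) = E at *
  generalize exp (2 * (w * B)) = G at *
  have hE0 : 0 < E - 1 := sub_pos.2 hE
  have hG0 : 0 < G - 1 := sub_pos.2 hG
  have hE' : 0 < E := by linarith
  have hmean : w * E⁻¹ + (1 - w) * G - 1 = ((1 - w) * (G - 1) * E - w * (E - 1)) / E := by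
    field_simp; ring
  have hcoth : (1 - w) / ((E - 1) / (E + 1)) + 1 - w / ((G - 1) / (G + 1))
      = 2 * ((1 - w) * (G - 1) * E - w * (E - 1)) / ((E - 1) * (G - 1)) := by
    field_simp; ring
  rw [← sub_pos, hmean, div_pos_iff_of_pos_right hE', ← sub_pos (b := w / _), hcoth,
    div_pos_iff_of_pos_right (mul_pos hE0 hG0), mul_pos_iff_of_pos_left two_pos]

lemma one_lt_weighted_exp_of_weight_le {v : ℝ} (hA : 0 < A) (hB : 0 < B) (hw : 0 < w)
    (hwv : w ≤ v) (hv : v < 1)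
    (h : 1 < v * exp (-(2 * ((1 - v) * A))) + (1 - v) * exp (2 * (v * B))) :
    1 < w * exp (-(2 * ((1 - w) * A))) + (1 - w) * exp (2 * (w * B)) := by
  rw [one_lt_weighted_exp_iff (hw.trans_le hwv) hv hA hB] at h
  rw [one_lt_weighted_exp_iff hw (hwv.trans_lt hv) hA hB]
  calc w / tanh (w * B) ≤ v / tanh (v * B) := div_tanh_mul_le_div_tanh_mul hw hwv hB
    _ < (1 - v) / tanh ((1 - v) * A) + 1 := h
    _ ≤ (1 - w) / tanh ((1 - w) * A) + 1 :=
      add_le_add_left (div_tanh_mul_le_div_tanh_mul (sub_pos.2 hv) (sub_le_sub_left hwv 1) hA) 1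

end Weights

/-- The weighted mean of `(sinh x / x) ^ (k * p)` and `(tanh x / x) ^ p` in the Wilker-type
inequality. -/
noncomputable def wilkerMean (k p x : ℝ) : ℝ :=
  2 / (k + 2) * (sinh x / x) ^ (k * p) + k / (k + 2) * (tanh x / x) ^ p

section Sufficiency

variable {k p x : ℝ}

lemma one_lt_wilkerMean_of_pos (hk : 0 < k) (hp : 0 < p) (hx : 0 < x) : 1 < wilkerMean k p x := by
  have hS := sinh_div_self_pos hx.ne'
  have hT := tanh_div_self_pos hx.ne'
  calc 1 < ((sinh x / x) ^ 2 * (tanh x / x)) ^ (k * p / (k + 2)) :=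
        one_lt_rpow (one_lt_sinh_div_self_sq_mul_tanh_div_self hx) (by positivity)
    _ = ((sinh x / x) ^ (k * p)) ^ (2 / (k + 2)) * ((tanh x / x) ^ p) ^ (k / (k + 2)) := by
        rw [mul_rpow (by positivity) hT.le, ← rpow_natCast_mul hS.le, ← rpow_mul hS.le,
          ← rpow_mul hT.le]
        congr 2
        · push_cast; ring
        · ring
    _ ≤ wilkerMean k p x :=
        geom_mean_le_arith_mean2_weighted (by positivity) (by positivity) (by positivity)
          (by positivity) (by field_simp; ring)

lemma one_lt_wilkerMean_of_le {q : ℝ} (hk : 0 < k) (hpq : p ≤ q) (hq : q < 0) (hx : x ≠ 0)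
    (h : 1 < wilkerMean k q x) : 1 < wilkerMean k p x := by
  have hS := sinh_div_self_pos hx
  have hT := tanh_div_self_pos hx
  have hr : 1 ≤ p / q := (one_le_div_of_neg hq).2 hpq
  have hqr : q * (p / q) = p := mul_div_cancel₀ p hq.ne
  calc 1 < wilkerMean k q x ^ (p / q) := one_lt_rpow h (by linarith)
    _ ≤ 2 / (k + 2) * ((sinh x / x) ^ (k * q)) ^ (p / q)
          + k / (k + 2) * ((tanh x / x) ^ q) ^ (p / q) :=
        (convexOn_rpow hr).2 (rpow_nonneg hS.le _) (rpow_nonneg hT.le _) (by positivity)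
          (by positivity) (by field_simp; ring)
    _ = wilkerMean k p x := by
        rw [← rpow_mul hS.le, ← rpow_mul hT.le, mul_assoc, hqr, wilkerMean]

lemma two_mul_pow_six_add_one_div_three_lt {t : ℝ} (ht : 1 < t) :
    (2 * t ^ 6 + 1) / 3 < t * ((2 + t ^ 4) / 3) ^ (9 / 4 : ℝ) := by
  have hpoly (s : ℝ) (hs : 1 < s) : 243 * (2 * s ^ 3 + 1) ^ 4 < s ^ 2 * (2 + s ^ 2) ^ 9 := by
    -- the difference is a polynomial in `s - 1` with positive coefficients
    obtain ⟨y, rfl⟩ : ∃ y, s = 1 + y := ⟨s - 1, by ring⟩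
    have hy : 0 < y := by linarith
    rw [← sub_pos]
    ring_nf
    positivity
  refine lt_of_pow_lt_pow_left₀ 4 (by positivity) ?_
  have hpow : (((2 + t ^ 4) / 3) ^ (9 / 4 : ℝ)) ^ 4 = ((2 + t ^ 4) / 3) ^ 9 := by
    rw [← rpow_mul_natCast (by positivity), ← rpow_natCast]
    norm_num
  rw [mul_pow t, hpow, ← sub_pos]
  have := hpoly (t ^ 2) (one_lt_pow₀ ht two_ne_zero)
  calc 0 < ((t ^ 2) ^ 2 * (2 + (t ^ 2) ^ 2) ^ 9 - 243 * (2 * (t ^ 2) ^ 3 + 1) ^ 4) / 3 ^ 9 :=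
        div_pos (sub_pos.2 this) (by norm_num)
    _ = t ^ 4 * ((2 + t ^ 4) / 3) ^ 9 - ((2 * t ^ 6 + 1) / 3) ^ 4 := by ring

lemma hasDerivAt_two_add_rpow_div_three_rpow {c : ℝ} (hc : 0 < c) (q r : ℝ) :
    HasDerivAt (fun c : ℝ ↦ ((2 + c ^ q) / 3) ^ r)
      (q * r / 3 * c ^ (q - 1) * ((2 + c ^ q) / 3) ^ (r - 1)) c := by
  refine ((((hasDerivAt_rpow_const (p := q) (Or.inl hc.ne')).const_add 2).div_const
    3).rpow_const (p := r) (Or.inl (by positivity))).congr_deriv ?_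
  ring

lemma sinh_mul_rpow_cosh_lt_self (hx : 0 < x) :
    sinh x * ((2 + cosh x ^ (4 / 5 : ℝ)) / 3) ^ (-5 / 4 : ℝ) < x := by
  refine (sinh_mul_comp_cosh_lt (fun c hc ↦ hasDerivAt_two_add_rpow_div_three_rpow
    (zero_lt_one.trans_le hc) _ _) (fun c hc ↦ ?_) hx).trans_eq (one_mul x)
  obtain ⟨t, ht, rfl⟩ : ∃ t, 1 < t ∧ t ^ 5 = c :=
    ⟨c ^ (1 / 5 : ℝ), one_lt_rpow hc (by norm_num), by
      rw [← rpow_mul_natCast (by linarith)]; norm_num⟩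
  have ht0 : 0 < t := by linarith
  have hpow₁ : (t ^ 5) ^ (4 / 5 : ℝ) = t ^ 4 := by
    rw [← rpow_natCast_mul ht0.le, ← rpow_natCast]; norm_num
  have hpow₂ : (t ^ 5) ^ (4 / 5 - 1 : ℝ) = t⁻¹ := by
    rw [← rpow_natCast_mul ht0.le, ← rpow_neg_one]; norm_num
  rw [hpow₁, hpow₂]
  have hmean := two_mul_pow_six_add_one_div_three_lt ht
  have hM : 0 < (2 + t ^ 4) / 3 := by positivity
  have hpow₃ : ((2 + t ^ 4) / 3) ^ (-5 / 4 : ℝ)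
      = (2 + t ^ 4) / 3 * (((2 + t ^ 4) / 3) ^ (9 / 4 : ℝ))⁻¹ := by
    rw [← rpow_neg hM.le, ← rpow_one_add' hM.le (by norm_num)]; norm_num
  have hpow₄ : ((2 + t ^ 4) / 3) ^ (-5 / 4 - 1 : ℝ) = (((2 + t ^ 4) / 3) ^ (9 / 4 : ℝ))⁻¹ := by
    rw [← rpow_neg hM.le]; norm_num
  rw [hpow₃, hpow₄]
  calc t ^ 5 * ((2 + t ^ 4) / 3 * (((2 + t ^ 4) / 3) ^ (9 / 4 : ℝ))⁻¹)
        + ((t ^ 5) ^ 2 - 1) * (4 / 5 * (-5 / 4) / 3 * t⁻¹ * (((2 + t ^ 4) / 3) ^ (9 / 4 : ℝ))⁻¹)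
      = (2 * t ^ 6 + 1) / 3 / (t * ((2 + t ^ 4) / 3) ^ (9 / 4 : ℝ)) := by
        field_simp; ring
    _ < 1 := (div_lt_one (by positivity)).2 hmean

lemma one_lt_wilkerMean_one (hx : 0 < x) : 1 < wilkerMean 1 (-(4 / 5)) x := by
  have hS := sinh_div_self_pos hx.ne'
  have hC := cosh_pos x
  have hM : 0 < (2 + cosh x ^ (4 / 5 : ℝ)) / 3 := by positivity
  have hlt : (sinh x / x) ^ (4 / 5 : ℝ) < (2 + cosh x ^ (4 / 5 : ℝ)) / 3 := by
    have h := sinh_mul_rpow_cosh_lt_self hx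
    rw [neg_div, rpow_neg hM.le, ← div_eq_mul_inv, div_lt_iff₀ (by positivity)] at h
    calc (sinh x / x) ^ (4 / 5 : ℝ)
        < (((2 + cosh x ^ (4 / 5 : ℝ)) / 3) ^ (5 / 4 : ℝ)) ^ (4 / 5 : ℝ) :=
          rpow_lt_rpow hS.le ((div_lt_iff₀' hx).2 h) (by norm_num)
      _ = (2 + cosh x ^ (4 / 5 : ℝ)) / 3 := by
          rw [← rpow_mul hM.le]; norm_num
  have hmean : wilkerMean 1 (-(4 / 5)) x
      = (2 + cosh x ^ (4 / 5 : ℝ)) / 3 / (sinh x / x) ^ (4 / 5 : ℝ) := by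
    rw [wilkerMean, one_mul, tanh_div_self_eq, rpow_neg hS.le, rpow_neg (by positivity),
      div_rpow hS.le hC.le]
    have := rpow_pos_of_pos hS (4 / 5)
    field_simp
    ring
  rwa [hmean, one_lt_div (by positivity)]

lemma wilkerMean_threshold_eq (hk : 0 < k) (hx : x ≠ 0) :
    wilkerMean k (-(12 / (5 * (k + 2)))) x =
      2 / (k + 2) * exp (-(2 * ((1 - 2 / (k + 2)) * (6 / 5 * log (sinh x / x)))))
        + (1 - 2 / (k + 2)) * exp (2 * (2 / (k + 2) * (-(3 / 5) * log (tanh x / x)))) := by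
  have hw : 1 - 2 / (k + 2) = k / (k + 2) := by field_simp; ring
  rw [wilkerMean, rpow_def_of_pos (sinh_div_self_pos hx),
    rpow_def_of_pos (tanh_div_self_pos hx), hw]
  congr 3
  · field_simp; ring
  · field_simp; ring

lemma one_lt_wilkerMean_threshold (hk : 1 ≤ k) (hx : 0 < x) :
    1 < wilkerMean k (-(12 / (5 * (k + 2)))) x := by
  have hA : 0 < 6 / 5 * log (sinh x / x) :=
    mul_pos (by norm_num) (log_pos ((one_lt_div hx).2 (self_lt_sinh_iff.2 hx)))
  have hB : 0 < -(3 / 5) * log (tanh x / x) :=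
    mul_pos_of_neg_of_neg (by norm_num)
      (log_neg (tanh_div_self_pos hx.ne') ((div_lt_one hx).2 (tanh_lt_self hx)))
  have hone : 1 < wilkerMean 1 (-(12 / (5 * (1 + 2)))) x := by
    have := one_lt_wilkerMean_one hx
    norm_num at this ⊢
    exact this
  rw [wilkerMean_threshold_eq one_pos hx.ne'] at hone
  rw [wilkerMean_threshold_eq (by linarith) hx.ne']
  exact one_lt_weighted_exp_of_weight_le hA hB (by positivity) (by gcongr) (by norm_num) hone

end Sufficiency

section Asymptotics

lemma tendsto_cosh_sub_div_pow_four :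
    Tendsto (fun x ↦ (cosh x - (1 + x ^ 2 / 2)) / x ^ 4) (𝓝[≠] 0) (𝓝 (1 / 24)) := by
  have hexp := tendsto_exp_sub_sum_range_div_pow 4
  convert (hexp.add (hexp.comp tendsto_neg_nhdsNE_zero)).div_const 2 using 2 with x
  · simp only [Function.comp_apply, Finset.sum_range_succ, Finset.sum_range_zero, cosh_eq,
      Nat.factorial]
    push_cast
    ring
  · norm_num [Nat.factorial]

lemma tendsto_sinh_div_self_sub_div_pow_four :
    Tendsto (fun x ↦ (sinh x / x - (1 + x ^ 2 / 6)) / x ^ 4) (𝓝[≠] 0) (𝓝 (1 / 120)) := by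
  have hexp := tendsto_exp_sub_sum_range_div_pow 5
  have h := (hexp.add (hexp.comp tendsto_neg_nhdsNE_zero)).div_const 2
  have hlim : ((1 / (5 : ℕ).factorial + 1 / (5 : ℕ).factorial) / 2 : ℝ) = 1 / 120 := by
    norm_num [Nat.factorial]
  rw [hlim] at h
  refine h.congr' ?_
  filter_upwards [self_mem_nhdsWithin] with x (hx : x ≠ 0)
  simp only [Function.comp_apply, Finset.sum_range_succ, Finset.sum_range_zero, sinh_eq,
    Nat.factorial]
  push_cast
  field_simp
  ring

lemma tendsto_sinh_div_self_sub_one_div_sq :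
    Tendsto (fun x ↦ (sinh x / x - 1) / x ^ 2) (𝓝[≠] 0) (𝓝 (1 / 6)) := by
  have h := ((tendsto_pow_nhdsNE_zero two_ne_zero).mul
    tendsto_sinh_div_self_sub_div_pow_four).add_const (1 / 6)
  rw [zero_mul, zero_add] at h
  refine h.congr' ?_
  filter_upwards [self_mem_nhdsWithin] with x (hx : x ≠ 0)
  field_simp
  ring

lemma tendsto_cosh_nhdsNE_zero : Tendsto cosh (𝓝[≠] 0) (𝓝 1) :=
  (continuous_cosh.tendsto' 0 1 cosh_zero).mono_left nhdsWithin_le_nhds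

lemma tendsto_log_sinh_div_self_div_sq :
    Tendsto (fun x ↦ log (sinh x / x) / x ^ 2) (𝓝[≠] 0) (𝓝 (1 / 6)) :=
  tendsto_log_div (tendsto_of_tendsto_sub_div (tendsto_pow_nhdsNE_zero two_ne_zero)
    (eventually_mem_nhdsWithin.mono fun _ hx ↦ pow_ne_zero 2 hx)
    tendsto_sinh_div_self_sub_one_div_sq) tendsto_sinh_div_self_sub_one_div_sq

lemma tendsto_sinh_div_self_pow_three_sub_cosh_div_pow_four :
    Tendsto (fun x ↦ ((sinh x / x) ^ 3 - cosh x) / x ^ 4) (𝓝[≠] 0) (𝓝 (1 / 15)) := by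
  have hS := tendsto_sinh_div_self_sub_one_div_sq
  have h := ((tendsto_sinh_div_self_sub_div_pow_four.const_mul 3).sub
    tendsto_cosh_sub_div_pow_four).add
      (((hS.pow 2).const_mul 3).add ((tendsto_pow_nhdsNE_zero two_ne_zero).mul (hS.pow 3)))
  have hlim : (3 * (1 / 120) - 1 / 24 + (3 * (1 / 6) ^ 2 + 0 * (1 / 6) ^ 3) : ℝ) = 1 / 15 := by
    norm_num
  rw [hlim] at h
  refine h.congr' ?_
  filter_upwards [self_mem_nhdsWithin] with x (hx : x ≠ 0)
  generalize sinh x / x = S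
  field_simp
  ring

lemma tendsto_two_mul_log_add_log_div_pow_four :
    Tendsto (fun x ↦ (2 * log (sinh x / x) + log (tanh x / x)) / x ^ 4) (𝓝[≠] 0)
      (𝓝 (1 / 15)) := by
  have hratio : Tendsto (fun x ↦ ((sinh x / x) ^ 3 / cosh x - 1) / x ^ 4) (𝓝[≠] 0)
      (𝓝 (1 / 15)) := by
    have h := tendsto_sinh_div_self_pow_three_sub_cosh_div_pow_four.div
      tendsto_cosh_nhdsNE_zero one_ne_zero
    rw [div_one] at h
    refine h.congr fun x ↦ ?_
    rw [Pi.div_apply, div_right_comm, sub_div, div_self (cosh_pos x).ne']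
  have hone : Tendsto (fun x ↦ (sinh x / x) ^ 3 / cosh x) (𝓝[≠] 0) (𝓝 1) :=
    tendsto_of_tendsto_sub_div (tendsto_pow_nhdsNE_zero four_ne_zero)
      (eventually_mem_nhdsWithin.mono fun _ hx ↦ pow_ne_zero 4 hx) hratio
  refine (tendsto_log_div hone hratio).congr' ?_
  filter_upwards [self_mem_nhdsWithin] with x hx
  have hS := (sinh_div_self_pos hx).ne'
  rw [tanh_div_self_eq, log_div hS (cosh_pos x).ne', log_div (pow_ne_zero 3 hS) (cosh_pos x).ne',
    log_pow]
  push_cast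
  ring

lemma tendsto_log_tanh_div_self_div_sq :
    Tendsto (fun x ↦ log (tanh x / x) / x ^ 2) (𝓝[≠] 0) (𝓝 (-(1 / 3))) := by
  have h := ((tendsto_pow_nhdsNE_zero two_ne_zero).mul
    tendsto_two_mul_log_add_log_div_pow_four).sub (tendsto_log_sinh_div_self_div_sq.const_mul 2)
  have hlim : (0 * (1 / 15) - 2 * (1 / 6) : ℝ) = -(1 / 3) := by norm_num
  rw [hlim] at h
  refine h.congr' ?_
  filter_upwards [self_mem_nhdsWithin] with x (hx : x ≠ 0)
  field_simp
  ring

lemma tendsto_exp_mul_sub_div_pow_four {u : ℝ → ℝ} {c : ℝ}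
    (hu : Tendsto (fun x ↦ u x / x ^ 2) (𝓝[≠] 0) (𝓝 c)) (r : ℝ) :
    Tendsto (fun x ↦ (exp (u x * r) - 1 - u x * r) / x ^ 4) (𝓝[≠] 0) (𝓝 ((c * r) ^ 2 / 2)) := by
  have hur : Tendsto (fun x ↦ u x * r / x ^ 2) (𝓝[≠] 0) (𝓝 (c * r)) :=
    (hu.mul_const r).congr fun x ↦ div_mul_eq_mul_div _ _ _
  have hzero : Tendsto (fun x ↦ u x * r) (𝓝[≠] 0) (𝓝 0) :=
    tendsto_of_tendsto_sub_div (tendsto_pow_nhdsNE_zero two_ne_zero)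
      (eventually_mem_nhdsWithin.mono fun _ hx ↦ pow_ne_zero 2 hx)
      (by simpa only [sub_zero] using hur)
  refine (tendsto_exp_sub_one_sub_div_sq hzero hur).congr fun x ↦ ?_
  rw [← pow_mul]

lemma tendsto_wilkerMean_sub_one_div_pow_four {k : ℝ} (hk : k + 2 ≠ 0) (p : ℝ) :
    Tendsto (fun x ↦ (wilkerMean k p x - 1) / x ^ 4) (𝓝[≠] 0)
      (𝓝 (k * p / (k + 2) * (1 / 15 + p * (k + 2) / 36))) := by
  have h := ((tendsto_two_mul_log_add_log_div_pow_four.const_mul (k * p / (k + 2))).add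
    ((tendsto_exp_mul_sub_div_pow_four tendsto_log_sinh_div_self_div_sq (k * p)).const_mul
      (2 / (k + 2)))).add
    ((tendsto_exp_mul_sub_div_pow_four tendsto_log_tanh_div_self_div_sq p).const_mul (k / (k + 2)))
  convert h.congr' ?_ using 2
  · field_simp
    ring
  filter_upwards [self_mem_nhdsWithin] with x (hx : x ≠ 0)
  rw [wilkerMean, rpow_def_of_pos (sinh_div_self_pos hx), rpow_def_of_pos (tanh_div_self_pos hx)]
  field_simp
  ring

lemma le_threshold_of_forall_one_lt_wilkerMean {k p : ℝ} (hk : 0 < k) (hp : p < 0)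
    (h : ∀ x, 0 < x → 1 < wilkerMean k p x) : p ≤ -(12 / (5 * (k + 2))) := by
  have hlim : 0 ≤ k * p / (k + 2) * (1 / 15 + p * (k + 2) / 36) := by
    refine ge_of_tendsto ((tendsto_wilkerMean_sub_one_div_pow_four (by positivity) p).mono_left
      (nhdsGT_le_nhdsNE 0)) ?_
    filter_upwards [self_mem_nhdsWithin] with x hx
    exact div_nonneg (sub_nonneg.2 (h x hx).le) (by positivity)
  have hcoef : k * p / (k + 2) < 0 :=
    div_neg_of_neg_of_pos (mul_neg_of_pos_of_neg hk hp) (by positivity)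
  have hbracket := nonpos_of_mul_nonneg_right hlim hcoef
  rw [le_neg, div_le_iff₀ (by positivity)]
  linarith

end Asymptotics

theorem wilker_hyp_gt (k : ℝ) (hk : 1 ≤ k) (p : ℝ) (hp : p ≠ 0) :
    (∀ x ∈ Ioi (0 : ℝ),
        2 / (k + 2) * (sinh x / x) ^ (k * p) + k / (k + 2) * (tanh x / x) ^ p > 1) ↔
      (0 < p ∨ p ≤ -(12 / (5 * (k + 2)))) := by
  have hk0 : 0 < k := one_pos.trans_le hk
  constructor
  · intro h
    rcases hp.lt_or_gt with hneg | hpos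
    · exact Or.inr (le_threshold_of_forall_one_lt_wilkerMean hk0 hneg h)
    · exact Or.inl hpos
  · rintro (hpos | hle) x hx
    · exact one_lt_wilkerMean_of_pos hk0 hpos hx
    · exact one_lt_wilkerMean_of_le hk0 hle (neg_neg_of_pos (by positivity)) (ne_of_gt hx)
        (one_lt_wilkerMean_threshold hk hx)
end
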